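/- arXiv:2004.07766 — 3 statements merged into one kernel-verified Lean document; each statement's English description precedes it below -/
import Mathlib

section
/- Let p_1, ..., p_k be pairwise distinct nonzero integral polynomials. Then for every colouring χ: ℤ → C of the integers with an arbitrary (possibly infinite) set C of colours, there exist a, d ∈ ℤ with d ≠ 0 such that either χ takes the same value on all of a, a+p_1(d), ..., a+p_k(d), or the integers a, a+p_1(d), ..., a+p_k(d) are pairwise distinct and χ takes pairwise distinct values on them. -/
/-!
Suppose that no `(a, d)` with `d ≠ 0` is rainbow. Then at every `(a, d)` two of the points
`a + p i d` collide in colour, and the colliding pair of indices is a *finite* colouring of the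
plane. The plane is acted on by the group of polynomial skew shifts `(a, d) ↦ (a + P(d), d + k)`,
and colour focusing with PET induction shows that, for finitely many polynomial paths `f` in this
group with `f 0 = 1`, some `(a, d)` and `t > 0` have the same colliding pair `p`, `q` at all the
images `f t • (a, d)`.

The paths are chosen so that these collisions chain together. Reading a collision at two images of
`(a, d)` compares `a + q(d)` with its perturbation by a difference of `D = q - p` with step
vanishing at `t = 0`. After `n - 1` further differences, `n = deg D`, only the leading coefficient
of `D` is left, and `a + q(d)` is seen to have the colour of `a + q(d) + r(e)` for
`e = n! * lc(D) * t ^ n` and every polynomial `r` with `r(0) = 0`. Taking for `r` each of the given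
polynomials yields a monochromatic configuration with common difference `e`.
-/

namespace PolynomialVdW

section Recurrence

open scoped Pointwise

variable {G κ : Type*} [Group G]

/-- The van der Waerden property of a family `F` of sequences in a group: every finite colouring of
the group has a point `x` and a time `t > 0` such that all translates `f t * x`, `f ∈ F`, have the
colour of `x`. The candidates for `x` and `t` are confined to finite sets depending only on the
number of colours, which is what allows this to be applied to product colourings. -/
def UniformlyRecurrent (F : Set (ℕ → G)) : Prop :=
  ∀ r : ℕ, ∃ (W : Finset G) (N : Finset ℕ), (∀ t ∈ N, 0 < t) ∧
    ∀ c : G → Fin r, ∃ x ∈ W, ∃ t ∈ N, ∀ f ∈ F, c (f t * x) = c x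

/-- The family of conjugated increments of `F` relative to `f₀`, to which colour focusing for `F`
is reduced: its recurrence moves a spoke `{f T * x | f ∈ F}` to a spoke at a new centre. -/
def incrementFamily (F : Set (ℕ → G)) (f₀ : ℕ → G) (N : Finset ℕ) (W : Finset G) : Set (ℕ → G) :=
  {g | ∃ f ∈ F, ∃ T ∈ N, ∃ x ∈ W, g = fun t => (f T * x)⁻¹ * (f (T + t) * (f₀ t)⁻¹) * x}

/-- Colour focusing: every colour in `K` is the colour of a monochromatic spoke `{f T * x | f ∈ F}`
with `T ∈ N`, all these spokes having the common centre `x`. -/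
def IsFocused (F : Set (ℕ → G)) (N : Finset ℕ) (c : G → κ) (x : G) (K : Finset κ) : Prop :=
  ∀ k ∈ K, ∃ T ∈ N, ∀ f ∈ F, c (f T * x) = k

lemma UniformlyRecurrent.exists_finset {F : Set (ℕ → G)} (h : UniformlyRecurrent F)
    (κ : Type*) [Finite κ] :
    ∃ (W : Finset G) (N : Finset ℕ), (∀ t ∈ N, 0 < t) ∧
      ∀ c : G → κ, ∃ x ∈ W, ∃ t ∈ N, ∀ f ∈ F, c (f t * x) = c x := by
  obtain ⟨n, ⟨e⟩⟩ := Finite.exists_equiv_fin κ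
  obtain ⟨W, N, hN, H⟩ := h n
  refine ⟨W, N, hN, fun c => ?_⟩
  obtain ⟨x, hx, t, ht, hc⟩ := H (e ∘ c)
  exact ⟨x, hx, t, ht, fun f hf => e.injective (hc f hf)⟩

lemma UniformlyRecurrent.mono {F F' : Set (ℕ → G)} (hF : F ⊆ F') (h : UniformlyRecurrent F') :
    UniformlyRecurrent F := fun r =>
  let ⟨W, N, hN, H⟩ := h r
  ⟨W, N, hN, fun c =>
    let ⟨x, hx, t, ht, hc⟩ := H c
    ⟨x, hx, t, ht, fun f hf => hc f (hF hf)⟩⟩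

lemma uniformlyRecurrent_empty : UniformlyRecurrent (∅ : Set (ℕ → G)) := fun _ =>
  ⟨{1}, {1}, by simp, fun _ => ⟨1, by simp, 1, by simp, by simp⟩⟩

lemma UniformlyRecurrent.insert_one {F : Set (ℕ → G)} (h : UniformlyRecurrent F) :
    UniformlyRecurrent (insert 1 F) := by
  intro r
  obtain ⟨W, N, hN, H⟩ := h r
  refine ⟨W, N, hN, fun c => ?_⟩
  obtain ⟨x, hx, t, ht, hc⟩ := H c
  exact ⟨x, hx, t, ht, Set.forall_mem_insert.2 ⟨by simp, hc⟩⟩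

lemma IsFocused.insert [DecidableEq κ] {F : Set (ℕ → G)} (h1 : ∀ f ∈ F, f 0 = 1)
    {N N' : Finset ℕ} {c : G → κ} {x y : G} {K : Finset κ} {t : ℕ} (h : IsFocused F N c x K)
    (ht : t ∈ N') (hmove : ∀ f ∈ F, ∀ T ∈ insert 0 N, c (f (T + t) * y) = c (f T * x)) :
    IsFocused F (insert 0 N + N') c y (insert (c x) K) := by
  refine Finset.forall_mem_insert .. |>.2 ⟨⟨0 + t, ?_, fun f hf => ?_⟩, fun k hk => ?_⟩
  · exact Finset.add_mem_add (Finset.mem_insert_self ..) ht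
  · rw [hmove f hf 0 (Finset.mem_insert_self ..), h1 f hf, one_mul]
  · obtain ⟨T, hT, hk⟩ := h k hk
    have hT := Finset.mem_insert_of_mem (b := 0) hT
    exact ⟨T + t, Finset.add_mem_add hT ht, fun f hf => (hmove f hf T hT).trans (hk f hf)⟩

lemma IsFocused.mono {F : Set (ℕ → G)} {N N' : Finset ℕ} {c : G → κ} {x : G} {K : Finset κ}
    (h : IsFocused F N c x K) (hN : N ⊆ N') : IsFocused F N' c x K := fun k hk =>
  let ⟨T, hT, hc⟩ := h k hk
  ⟨T, hN hT, hc⟩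

lemma exists_forall_move {F : Set (ℕ → G)} (hF : F.Finite) {f₀ : ℕ → G} {N : Finset ℕ}
    {W : Finset G} (h : UniformlyRecurrent (incrementFamily F f₀ N W)) (κ : Type*) [Finite κ] :
    ∃ (W' : Finset G) (N' : Finset ℕ), (∀ t ∈ N', 0 < t) ∧
      ∀ c : G → κ, ∃ z ∈ W', ∃ t ∈ N', ∀ x ∈ W, ∀ f ∈ F, ∀ T ∈ N,
        c (f (T + t) * ((f₀ t)⁻¹ * (x * z))) = c (f T * (x * z)) := by
  have hspokes : {w | ∃ f ∈ F, ∃ T ∈ N, ∃ x ∈ W, f T * x = w}.Finite := by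
    refine ((hF.prod (N.finite_toSet.prod W.finite_toSet)).image
      fun p => p.1 p.2.1 * p.2.2).subset ?_
    rintro _ ⟨f, hf, T, hT, x, hx, rfl⟩
    exact ⟨(f, T, x), ⟨hf, hT, hx⟩, rfl⟩
  have := hspokes.to_subtype
  obtain ⟨W', N', hN', H⟩ :=
    h.exists_finset ({w | ∃ f ∈ F, ∃ T ∈ N, ∃ x ∈ W, f T * x = w} → κ)
  refine ⟨W', N', hN', fun c => ?_⟩
  -- One recurrence for a product colouring serves all the spokes simultaneously.
  obtain ⟨z, hz, t, ht, hc⟩ := H fun g w => c (w * g)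
  refine ⟨z, hz, t, ht, fun x hx f hf T hT => ?_⟩
  have := congrFun (hc _ ⟨f, hf, T, hT, x, hx, rfl⟩) ⟨f T * x, f, hf, T, hT, x, hx, rfl⟩
  simpa only [mul_assoc, mul_inv_cancel_left, mul_inv_rev] using this

lemma exists_isFocused {F : Set (ℕ → G)} (hF : F.Finite) (h1 : ∀ f ∈ F, f 0 = 1) {f₀ : ℕ → G}
    (h : ∀ N W, UniformlyRecurrent (incrementFamily F f₀ N W)) (κ : Type*) [Finite κ] (s : ℕ) :
    ∃ (W : Finset G) (N : Finset ℕ), (∀ t ∈ N, 0 < t) ∧ ∀ c : G → κ,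
      (∃ x ∈ W, ∃ t ∈ N, ∀ f ∈ F, c (f t * x) = c x) ∨
        ∃ x ∈ W, ∃ K : Finset κ, K.card = s ∧ IsFocused F N c x K := by
  classical
  induction s with
  | zero => exact ⟨{1}, ∅, by simp, fun c => .inr ⟨1, by simp, ∅, rfl, by simp [IsFocused]⟩⟩
  | succ s ih =>
    obtain ⟨W, N, hN, H⟩ := ih
    obtain ⟨W', N', hN', H'⟩ := exists_forall_move hF (h (insert 0 N) W) κ
    refine ⟨insert 1 (N'.image fun t => (f₀ t)⁻¹) * (W * W'), N ∪ (insert 0 N + N'),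
      fun t ht => ?_, fun c => ?_⟩
    · obtain ht | ht := Finset.mem_union.1 ht
      · exact hN t ht
      · obtain ⟨T, -, t', ht', rfl⟩ := Finset.mem_add.1 ht
        exact Nat.add_pos_right T (hN' t' ht')
    obtain ⟨z, hz, t, ht, hmove⟩ := H' c
    have hcentre {x : G} (hx : x ∈ W) :
        x * z ∈ insert 1 (N'.image fun t => (f₀ t)⁻¹) * (W * W') := by
      rw [← one_mul (x * z)]
      exact Finset.mul_mem_mul (Finset.mem_insert_self ..) (Finset.mul_mem_mul hx hz)
    obtain ⟨x, hx, T, hT, hmono⟩ | ⟨x, hx, K, hK, hfoc⟩ := H fun g => c (g * z)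
    · exact .inl ⟨x * z, hcentre hx, T, Finset.mem_union_left _ hT,
        fun f hf => by simpa only [mul_assoc] using hmono f hf⟩
    replace hfoc : IsFocused F N c (x * z) K := by simpa only [IsFocused, mul_assoc] using hfoc
    by_cases hcol : c (x * z) ∈ K
    · obtain ⟨T, hT, hmono⟩ := hfoc _ hcol
      exact .inl ⟨x * z, hcentre hx, T, Finset.mem_union_left _ hT, hmono⟩
    · refine .inr ⟨(f₀ t)⁻¹ * (x * z), ?_, insert (c (x * z)) K, ?_,
        (hfoc.insert h1 ht (hmove x hx)).mono Finset.subset_union_right⟩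
      · exact Finset.mul_mem_mul (Finset.mem_insert_of_mem (Finset.mem_image_of_mem _ ht))
          (Finset.mul_mem_mul hx hz)
      · rw [Finset.card_insert_of_notMem hcol, hK]

theorem uniformlyRecurrent_of_incrementFamily {F : Set (ℕ → G)} (hF : F.Finite)
    (h1 : ∀ f ∈ F, f 0 = 1) {f₀ : ℕ → G}
    (h : ∀ N W, UniformlyRecurrent (incrementFamily F f₀ N W)) : UniformlyRecurrent F := by
  intro r
  obtain ⟨W, N, hN, H⟩ := exists_isFocused hF h1 h (Fin r) (r + 1)
  refine ⟨W, N, hN, fun c => (H c).resolve_right ?_⟩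
  rintro ⟨-, -, K, hK, -⟩
  simpa [hK] using K.card_le_univ

end Recurrence

open Polynomial

section TaylorCoefficients

variable {R : Type*} [CommRing R]

lemma coeff_taylor_of_natDegree_le {n : ℕ} {f : R[X]} (h : f.natDegree ≤ n) (r : R) :
    (taylor r f).coeff n = f.coeff n := by
  obtain h | rfl := h.lt_or_eq
  · rw [coeff_eq_zero_of_natDegree_lt h, coeff_eq_zero_of_natDegree_lt (by rwa [natDegree_taylor])]
  · exact coeff_taylor_natDegree ..

lemma coeff_taylor_of_natDegree_le_succ {n : ℕ} {f : R[X]} (h : f.natDegree ≤ n + 1) (r : R) :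
    (taylor r f).coeff n = f.coeff n + (n + 1) * f.coeff (n + 1) * r := by
  have hdeg : (hasseDeriv n f).natDegree ≤ 1 := (natDegree_hasseDeriv_le f n).trans (by lia)
  rw [taylor_coeff, eq_X_add_C_of_natDegree_le_one hdeg, hasseDeriv_coeff, hasseDeriv_coeff,
    zero_add, Nat.choose_self, Nat.add_comm 1 n, Nat.choose_succ_self_right]
  simp [add_comm]

lemma natDegree_taylor_sub_C_le (r s : R) (f : R[X]) :
    (taylor r f - C s).natDegree ≤ f.natDegree := by
  rw [natDegree_sub_C, natDegree_taylor]

lemma coeff_taylor_sub_C_eval {n : ℕ} {f : R[X]} (h : f.natDegree ≤ n) (h0 : f.coeff 0 = 0)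
    (r : R) : (taylor r f - C (f.eval r)).coeff n = f.coeff n := by
  obtain rfl | hn := eq_or_ne n 0
  · rw [coeff_sub, taylor_coeff_zero, coeff_C_zero, sub_self, h0]
  · rw [coeff_sub, coeff_C_of_ne_zero hn, sub_zero, coeff_taylor_of_natDegree_le h]

end TaylorCoefficients

/-- A polynomial skew shift of `R × R`: the pair `(P, k)` stands for `(a, d) ↦ (a + P(d), d + k)`,
and multiplication is composition. Over the coefficient ring `R[X]` this is a polynomial path of
skew shifts over `R`, the inner variable being the time. -/
@[ext] structure SkewShift (R : Type*) [CommRing R] where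
  /-- The polynomial `P`. -/
  fiber : R[X]
  /-- The translation `k` of the base. -/
  base : R

namespace SkewShift

variable {R S : Type*} [CommRing R] [CommRing S]

noncomputable instance : Mul (SkewShift R) :=
  ⟨fun g h => ⟨h.fiber + taylor h.base g.fiber, g.base + h.base⟩⟩

noncomputable instance : One (SkewShift R) := ⟨⟨0, 0⟩⟩

noncomputable instance : Inv (SkewShift R) := ⟨fun g => ⟨-taylor (-g.base) g.fiber, -g.base⟩⟩

@[simp] lemma fiber_mul (g h : SkewShift R) :
    (g * h).fiber = h.fiber + taylor h.base g.fiber := rfl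

@[simp] lemma base_mul (g h : SkewShift R) : (g * h).base = g.base + h.base := rfl

@[simp] lemma fiber_one : (1 : SkewShift R).fiber = 0 := rfl

@[simp] lemma base_one : (1 : SkewShift R).base = 0 := rfl

@[simp] lemma fiber_inv (g : SkewShift R) : g⁻¹.fiber = -taylor (-g.base) g.fiber := rfl

@[simp] lemma base_inv (g : SkewShift R) : g⁻¹.base = -g.base := rfl

noncomputable instance : Group (SkewShift R) :=
  Group.ofLeftAxioms
    (fun a b c => by
      ext1
      · simp only [fiber_mul, base_mul, map_add, taylor_taylor, add_comm b.base, add_assoc]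
      · exact add_assoc ..)
    (fun a => by ext1 <;> simp)
    (fun a => by ext1 <;> simp [taylor_taylor])

noncomputable instance : MulAction (SkewShift R) (R × R) where
  smul g v := (v.1 + g.fiber.eval v.2, v.2 + g.base)
  one_smul v := by
    change (v.1 + (0 : R[X]).eval v.2, v.2 + 0) = v
    simp
  mul_smul g h v := by
    change (v.1 + (h.fiber + taylor h.base g.fiber).eval v.2, v.2 + (g.base + h.base)) =
      (v.1 + h.fiber.eval v.2 + g.fiber.eval (v.2 + h.base), v.2 + h.base + g.base)
    rw [eval_add, taylor_eval, add_assoc, add_assoc, add_comm g.base]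

lemma smul_def (g : SkewShift R) (v : R × R) :
    g • v = (v.1 + g.fiber.eval v.2, v.2 + g.base) := rfl

/-- The map of skew shifts induced by a homomorphism of coefficient rings. -/
noncomputable def map (φ : R →+* S) : SkewShift R →* SkewShift S where
  toFun g := ⟨g.fiber.map φ, φ g.base⟩
  map_one' := by ext1 <;> simp
  map_mul' g h := by ext1 <;> simp

@[simp] lemma fiber_map (φ : R →+* S) (g : SkewShift R) : (map φ g).fiber = g.fiber.map φ := rfl

@[simp] lemma base_map (φ : R →+* S) (g : SkewShift R) : (map φ g).base = φ g.base := rfl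

lemma map_map {T : Type*} [CommRing T] (φ : R →+* S) (ψ : S →+* T) (g : SkewShift R) :
    map ψ (map φ g) = map (ψ.comp φ) g := by
  ext1 <;> simp [Polynomial.map_map]

lemma map_id (g : SkewShift R) : map (RingHom.id R) g = g := by
  ext1 <;> simp

/-- The position at time `t` of a polynomial path of skew shifts. -/
noncomputable def evalAt (t : R) : SkewShift R[X] →* SkewShift R := map (evalRingHom t)

/-- The path started at time `T`, that is `t ↦ f (T + t)`. -/
noncomputable def delay (T : R) : SkewShift R[X] →* SkewShift R[X] :=
  map (taylorAlgHom T : R[X] →+* R[X])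

/-- The constant paths. -/
noncomputable def const : SkewShift R →* SkewShift R[X] := map C

@[simp] lemma evalAt_const (t : R) (x : SkewShift R) : evalAt t (const x) = x := by
  rw [evalAt, const, map_map, show (evalRingHom t).comp C = RingHom.id R by ext; simp, map_id]

@[simp] lemma evalAt_delay (t T : R) (f : SkewShift R[X]) :
    evalAt t (delay T f) = evalAt (T + t) f := by
  rw [evalAt, delay, map_map, evalAt]
  congr 2
  ext <;> simp [add_comm]

lemma evalAt_eq_one_iff {t : R} {f : SkewShift R[X]} :
    evalAt t f = 1 ↔ f.fiber.map (evalRingHom t) = 0 ∧ f.base.eval t = 0 :=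
  SkewShift.ext_iff

lemma evalAt_smul (t : R) (f : SkewShift R[X]) (v : R × R) :
    evalAt t f • v = (v.1 + f.fiber.evalEval t v.2, v.2 + f.base.eval t) := by
  rw [smul_def, evalAt, fiber_map, map_evalRingHom_eval, base_map, coe_evalRingHom]

/-- The increment of the path `f` relative to `f₀` at time `T` and point `x`, that is
`t ↦ (f T * x)⁻¹ * (f (T + t) * (f₀ t)⁻¹) * x`, as in `incrementFamily`. -/
noncomputable def increment (f₀ f : SkewShift R[X]) (T : R) (x : SkewShift R) : SkewShift R[X] :=
  (const (evalAt T f * x))⁻¹ * (delay T f * f₀⁻¹) * const x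

lemma evalAt_increment (f₀ f : SkewShift R[X]) (T t : R) (x : SkewShift R) :
    evalAt t (increment f₀ f T x) =
      (evalAt T f * x)⁻¹ * (evalAt (T + t) f * (evalAt t f₀)⁻¹) * x := by
  simp only [increment, map_mul, map_inv, evalAt_const, evalAt_delay]

lemma base_increment (f₀ f : SkewShift R[X]) (T : R) (x : SkewShift R) :
    (increment f₀ f T x).base = taylor T f.base - C (f.base.eval T) - f₀.base := by
  simp only [increment, const, evalAt, delay, map_mul, mul_inv_rev, base_mul, base_inv, base_map,
    coe_evalRingHom, RingHom.coe_coe, taylorAlgHom_apply]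
  ring

lemma fiber_increment {f₀ f : SkewShift R[X]} (h₀ : f₀.base = 0) (h : f.base = 0) (T : R)
    (x : SkewShift R) :
    (increment f₀ f T x).fiber = taylor (C x.base) (f.fiber.map (taylorAlgHom T : R[X] →+* R[X])
      - (f.fiber.map (evalRingHom T)).map C - f₀.fiber) := by
  simp only [increment, const, evalAt, delay, map_mul, mul_inv_rev, fiber_mul, fiber_map, fiber_inv,
    base_mul, base_map, base_inv, h, h₀, neg_zero, taylor_zero', LinearMap.id_coe, id_eq, map_zero,
    add_zero, map_add, map_neg, map_sub, taylor_taylor, add_neg_cancel]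
  ring

/-- The positions of the coefficients of a polynomial path of skew shifts: `(m, j)` with `m : ℕ` is
the coefficient of `d ^ m * t ^ j` in the fibre, `(⊤, j)` that of `t ^ j` in the base. The base
comes on top because its increments perturb the fibre, but not vice versa. -/
abbrev Level : Type := ℕ∞ ×ₗ ℕ

/-- The base of a path (index `⊤`) and the coefficients of its fibre, as polynomials in the time. -/
noncomputable def slice (f : SkewShift R[X]) : ℕ∞ → R[X]
  | ⊤ => f.base
  | (m : ℕ) => f.fiber.coeff m

@[simp] lemma slice_top (f : SkewShift R[X]) : f.slice ⊤ = f.base := rfl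

@[simp] lemma slice_coe (f : SkewShift R[X]) (m : ℕ) : f.slice m = f.fiber.coeff m :=
  rfl

lemma coeff_zero_slice {f : SkewShift R[X]} (hf : evalAt 0 f = 1) (m : ℕ∞) :
    (f.slice m).coeff 0 = 0 := by
  obtain ⟨hfiber, hbase⟩ := evalAt_eq_one_iff.1 hf
  induction m with
  | top => rwa [slice_top, coeff_zero_eq_eval_zero]
  | coe m => simpa [coeff_zero_eq_eval_zero] using congrArg (coeff · m) hfiber

lemma natDegree_fiber_le {f : SkewShift R[X]} {m : ℕ}
    (h : ∀ m' > (m : ℕ∞), f.slice m' = 0) : f.fiber.natDegree ≤ m :=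
  natDegree_le_iff_coeff_eq_zero.2 fun m' hm' => h m' (Nat.cast_lt.2 hm')

lemma slice_increment {f₀ f : SkewShift R[X]} {m : ℕ∞} (h₀ : ∀ m' > m, f₀.slice m' = 0)
    (h : ∀ m' > m, f.slice m' = 0) (T : R) (x : SkewShift R) :
    (∀ m' > m, (increment f₀ f T x).slice m' = 0) ∧
      (increment f₀ f T x).slice m =
        taylor T (f.slice m) - C ((f.slice m).eval T) - f₀.slice m := by
  induction m with
  | top => exact ⟨fun m' hm' => absurd hm' not_top_lt, base_increment ..⟩
  | coe m =>
    have hb : f.base = 0 := h ⊤ (ENat.natCast_lt_top m)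
    have hb₀ : f₀.base = 0 := h₀ ⊤ (ENat.natCast_lt_top m)
    set u := f.fiber.map (taylorAlgHom T : R[X] →+* R[X])
      - (f.fiber.map (evalRingHom T)).map C - f₀.fiber with hu
    have hfiber : (increment f₀ f T x).fiber = taylor (C x.base) u := fiber_increment hb₀ hb T x
    have hdeg : u.natDegree ≤ m :=
      (natDegree_sub_le_of_le (natDegree_sub_le_of_le
        (natDegree_map_le.trans (natDegree_fiber_le h))
        ((natDegree_map_le.trans natDegree_map_le).trans (natDegree_fiber_le h)))
        (natDegree_fiber_le h₀)).trans (by simp)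
    refine ⟨fun m' hm' => ?_, ?_⟩
    · induction m' with
      | top => simp [base_increment, hb, hb₀]
      | coe m' =>
        rw [slice_coe, hfiber, coeff_eq_zero_of_natDegree_lt]
        rw [natDegree_taylor]
        exact hdeg.trans_lt (Nat.cast_lt.1 hm')
    · rw [slice_coe, hfiber, coeff_taylor_of_natDegree_le hdeg, hu]
      simp

/-- The coefficient of a path at a given position. -/
noncomputable def coeffAt (f : SkewShift R[X]) (l : Level) : R :=
  (f.slice (ofLex l).1).coeff (ofLex l).2

lemma coeffAt_one (l : Level) : (1 : SkewShift R[X]).coeffAt l = 0 := by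
  obtain ⟨⟨m, j⟩, rfl⟩ := toLex.surjective l
  induction m <;> simp [coeffAt]

lemma forall_gt_coeffAt_eq_zero_iff {f : SkewShift R[X]} {m : ℕ∞} {j : ℕ} :
    (∀ l > toLex (m, j), f.coeffAt l = 0) ↔
      (∀ m' > m, f.slice m' = 0) ∧ (f.slice m).natDegree ≤ j := by
  refine ⟨fun h => ⟨fun m' hm' => ?_, ?_⟩, fun ⟨hslice, hdeg⟩ l hl => ?_⟩
  · ext j'
    exact h (toLex (m', j')) (Prod.Lex.toLex_lt_toLex.2 (.inl hm'))
  · exact natDegree_le_iff_coeff_eq_zero.2 fun j' hj' =>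
      h (toLex (m, j')) (Prod.Lex.toLex_lt_toLex.2 (.inr ⟨rfl, hj'⟩))
  · obtain hm | ⟨hm, hj⟩ := Prod.Lex.lt_iff.1 hl
    · rw [coeffAt, hslice _ hm, coeff_zero]
    · rw [coeffAt, ← hm]
      exact coeff_eq_zero_of_natDegree_lt (hdeg.trans_lt hj)

lemma coeffAt_increment {f₀ f : SkewShift R[X]} {l : Level} (hf : evalAt 0 f = 1)
    (h₀ : ∀ l' > l, f₀.coeffAt l' = 0) (h : ∀ l' > l, f.coeffAt l' = 0) (T : R)
    (x : SkewShift R) :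
    (∀ l' > l, (increment f₀ f T x).coeffAt l' = 0) ∧
      (increment f₀ f T x).coeffAt l = f.coeffAt l - f₀.coeffAt l := by
  obtain ⟨⟨m, j⟩, rfl⟩ := toLex.surjective l
  rw [forall_gt_coeffAt_eq_zero_iff] at h h₀
  obtain ⟨hslice, hm⟩ := slice_increment h₀.1 h.1 T x
  refine ⟨forall_gt_coeffAt_eq_zero_iff.2 ⟨hslice, ?_⟩, ?_⟩
  · rw [hm]
    exact natDegree_sub_le_of_le ((natDegree_taylor_sub_C_le ..).trans h.2) h₀.2 |>.trans (by simp)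
  · simp only [coeffAt, ofLex_toLex]
    rw [hm, coeff_sub, coeff_taylor_sub_C_eval h.2 (coeff_zero_slice hf m)]

open Classical in
/-- The highest position of a nonzero coefficient; the value at the constant path `1` is junk. -/
noncomputable def level (f : SkewShift R[X]) : Level :=
  let m : ℕ∞ := if f.base = 0 then (f.fiber.natDegree : ℕ∞) else ⊤
  toLex (m, (f.slice m).natDegree)

/-- The level of a path together with its coefficient there. -/
noncomputable def leadTerm (f : SkewShift R[X]) : Level × R :=
  (f.level, f.coeffAt f.level)

lemma coeffAt_eq_zero_of_level_lt {f : SkewShift R[X]} {l : Level} (hl : f.level < l) :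
    f.coeffAt l = 0 := by
  refine forall_gt_coeffAt_eq_zero_iff.2 ⟨fun m hm => ?_, le_rfl⟩ l hl
  split_ifs at hm with hbase
  · induction m with
    | top => exact hbase
    | coe m => exact coeff_eq_zero_of_natDegree_lt (Nat.cast_lt.1 hm)
  · exact absurd hm not_top_lt

lemma coeffAt_level_ne_zero {f : SkewShift R[X]} (hf : f ≠ 1) : f.coeffAt f.level ≠ 0 := by
  by_cases hbase : f.base = 0
  · have hfiber : f.fiber ≠ 0 := fun h => hf (SkewShift.ext h hbase)
    simpa [level, coeffAt, hbase] using hfiber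
  · simp [level, coeffAt, hbase]

lemma level_lt {f : SkewShift R[X]} (hf : f ≠ 1) {l : Level} (h : ∀ l' ≥ l, f.coeffAt l' = 0) :
    f.level < l :=
  lt_of_not_ge fun hl => coeffAt_level_ne_zero hf (h _ hl)

lemma level_eq {f : SkewShift R[X]} {l : Level} (hl : f.coeffAt l ≠ 0)
    (h : ∀ l' > l, f.coeffAt l' = 0) : f.level = l := by
  have hf : f ≠ 1 := by
    rintro rfl
    exact hl (coeffAt_one l)
  exact le_antisymm (not_lt.1 fun hlt => coeffAt_level_ne_zero hf (h _ hlt))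
    (not_lt.1 fun hlt => hl (coeffAt_eq_zero_of_level_lt hlt))

open Classical in
/-- The leading term of an increment relative to `f₀`, where `q₀` and `q ≠ q₀` are the leading terms
of `f₀` and of the path. -/
noncomputable def reduceTerm (q₀ q : Level × R) : Level × R :=
  (q.1, if q.1 = q₀.1 then q.2 - q₀.2 else q.2)

lemma reduceTerm_leadTerm_snd {f₀ f : SkewShift R[X]} (hle : f₀.level ≤ f.level) :
    (reduceTerm f₀.leadTerm f.leadTerm).2 = f.coeffAt f.level - f₀.coeffAt f.level := by
  obtain hlt | heq := hle.lt_or_eq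
  · rw [coeffAt_eq_zero_of_level_lt hlt, sub_zero]
    exact if_neg hlt.ne'
  · rw [← heq]
    simp [reduceTerm, leadTerm, heq]

lemma level_increment_lt_or_leadTerm_eq {f₀ f : SkewShift R[X]} (hf0 : evalAt 0 f = 1)
    (hf : f ≠ 1) (hle : f₀.level ≤ f.level) {T : R} {x : SkewShift R}
    (hne : increment f₀ f T x ≠ 1) :
    (increment f₀ f T x).level < f₀.level ∨ f.leadTerm ≠ f₀.leadTerm ∧
      (increment f₀ f T x).leadTerm = reduceTerm f₀.leadTerm f.leadTerm := by
  obtain ⟨habove, hcoeff⟩ := coeffAt_increment hf0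
    (fun l hl => coeffAt_eq_zero_of_level_lt (hle.trans_lt hl))
    (fun l hl => coeffAt_eq_zero_of_level_lt hl) T x
  rw [← reduceTerm_leadTerm_snd hle] at hcoeff
  by_cases hq : f.leadTerm = f₀.leadTerm
  · left
    have hlevel : f.level = f₀.level := congrArg Prod.fst hq
    refine level_lt hne fun l hl => ?_
    obtain hl | rfl := hl.lt_or_eq'
    · exact habove l (hlevel ▸ hl)
    · rw [← hlevel, hcoeff, hq]
      simp [reduceTerm]
  · refine .inr ⟨hq, ?_⟩
    have hlead : (reduceTerm f₀.leadTerm f.leadTerm).2 ≠ 0 := by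
      rw [reduceTerm]
      split_ifs with hlevel
      · exact fun h => hq (Prod.ext hlevel (sub_eq_zero.1 h))
      · exact coeffAt_level_ne_zero hf
    have hlevel := level_eq (hcoeff ▸ hlead) habove
    rw [leadTerm, hlevel, hcoeff]
    rfl

end SkewShift

section PET

variable {R : Type*} [CommRing R]

open Multiset in
lemma isDershowitzMannaLT_of_filter_le_erase {α : Type*} [LinearOrder α] {a : α}
    {M N : Multiset α} (ha : a ∈ N) (h : M.filter (a ≤ ·) ≤ N.erase a) :
    IsDershowitzMannaLT M N := by
  obtain ⟨Z, hZ⟩ := Multiset.le_iff_exists_add.1 h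
  refine ⟨M.filter (a ≤ ·), M.filter (¬ a ≤ ·), a ::ₘ Z, cons_ne_zero, (filter_add_not ..).symm, ?_,
    fun y hy => ⟨a, mem_cons_self .., not_le.1 (mem_filter.1 hy).2⟩⟩
  rw [add_cons, ← hZ, cons_erase ha]

open Classical in
/-- The leading terms of the nonconstant paths in `F`. -/
noncomputable def leadTerms (F : Finset (SkewShift R[X])) : Finset (SkewShift.Level × R) :=
  (F.erase 1).image SkewShift.leadTerm

/-- The weight of a family of paths, on which the PET induction runs: the multiset of the levels of
its leading terms, compared in the Dershowitz–Manna order. -/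
noncomputable def weight (F : Finset (SkewShift R[X])) : Multiset SkewShift.Level :=
  (leadTerms F).val.map Prod.fst

open Classical in
/-- The increments of the nonconstant paths in `F`, at times in `N` and points in `W`. -/
noncomputable def increments (F : Finset (SkewShift R[X])) (f₀ : SkewShift R[X]) (N : Finset ℕ)
    (W : Finset (SkewShift R)) : Finset (SkewShift R[X]) :=
  (F.erase 1 ×ˢ N ×ˢ W).image fun q => f₀.increment q.1 q.2.1 q.2.2

lemma mem_leadTerms {F : Finset (SkewShift R[X])} {q : SkewShift.Level × R} :
    q ∈ leadTerms F ↔ ∃ f ∈ F, f ≠ 1 ∧ f.leadTerm = q := by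
  simp only [leadTerms, Finset.mem_image, Finset.mem_erase]
  grind

lemma mem_increments {F : Finset (SkewShift R[X])} {f₀ g : SkewShift R[X]} {N : Finset ℕ}
    {W : Finset (SkewShift R)} : g ∈ increments F f₀ N W ↔
      ∃ f ∈ F, f ≠ 1 ∧ ∃ T ∈ N, ∃ x ∈ W, f₀.increment f (T : R) x = g := by
  simp only [increments, Finset.mem_image, Finset.mem_product, Finset.mem_erase, Prod.exists]
  grind

lemma exists_reduceTerm_eq_of_mem_leadTerms {F : Finset (SkewShift R[X])}
    (hF : ∀ f ∈ F, SkewShift.evalAt 0 f = 1) {f₀ : SkewShift R[X]}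
    (hmin : ∀ f ∈ F, f ≠ 1 → f₀.level ≤ f.level) {N : Finset ℕ} {W : Finset (SkewShift R)}
    {q : SkewShift.Level × R} (hq : q ∈ leadTerms (increments F f₀ N W)) (hle : f₀.level ≤ q.1) :
    ∃ q' ∈ leadTerms F, q' ≠ f₀.leadTerm ∧ SkewShift.reduceTerm f₀.leadTerm q' = q := by
  obtain ⟨g, hg, hg1, rfl⟩ := mem_leadTerms.1 hq
  obtain ⟨f, hf, hf1, T, -, x, -, rfl⟩ := mem_increments.1 hg
  obtain hlt | ⟨hne, heq⟩ :=
    SkewShift.level_increment_lt_or_leadTerm_eq (hF f hf) hf1 (hmin f hf hf1) hg1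
  · exact absurd hle hlt.not_ge
  · exact ⟨f.leadTerm, mem_leadTerms.2 ⟨f, hf, hf1, rfl⟩, hne, heq.symm⟩

lemma weight_increments_lt {F : Finset (SkewShift R[X])}
    (hF : ∀ f ∈ F, SkewShift.evalAt 0 f = 1) {f₀ : SkewShift R[X]} (hf₀ : f₀ ∈ F) (hne : f₀ ≠ 1)
    (hmin : ∀ f ∈ F, f ≠ 1 → f₀.level ≤ f.level) (N : Finset ℕ) (W : Finset (SkewShift R)) :
    (weight (increments F f₀ N W)).IsDershowitzMannaLT (weight F) := by
  classical
  set E := (leadTerms F).erase f₀.leadTerm with hE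
  have hmem : f₀.leadTerm ∈ leadTerms F := mem_leadTerms.2 ⟨f₀, hf₀, hne, rfl⟩
  refine isDershowitzMannaLT_of_filter_le_erase
    (Multiset.mem_map_of_mem Prod.fst hmem : f₀.level ∈ weight F) ?_
  have hsub : (leadTerms (increments F f₀ N W)).filter (f₀.level ≤ Prod.fst ·) ⊆
      E.image (SkewShift.reduceTerm f₀.leadTerm) := by
    intro q hq
    obtain ⟨hq, hle⟩ := Finset.mem_filter.1 hq
    obtain ⟨q', hq', hne', rfl⟩ := exists_reduceTerm_eq_of_mem_leadTerms hF hmin hq hle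
    exact Finset.mem_image_of_mem _ (Finset.mem_erase.2 ⟨hne', hq'⟩)
  calc (weight (increments F f₀ N W)).filter (f₀.level ≤ ·)
      = ((leadTerms (increments F f₀ N W)).filter (f₀.level ≤ Prod.fst ·)).val.map Prod.fst := by
        rw [weight, Multiset.filter_map, Finset.filter_val]
        rfl
    _ ≤ (E.image (SkewShift.reduceTerm f₀.leadTerm)).val.map Prod.fst :=
        Multiset.map_le_map (Finset.val_le_iff.2 hsub)
    _ ≤ (E.val.map (SkewShift.reduceTerm f₀.leadTerm)).map Prod.fst :=
        Multiset.map_le_map (Multiset.dedup_le _)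
    _ = E.val.map Prod.fst := Multiset.map_map ..
    _ = (weight F).erase f₀.level := by
        rw [hE, Finset.erase_val, Multiset.map_erase_of_mem _ _ hmem]
        rfl

/-- The sequences of group elements traced out by the paths in `F` at natural times. -/
def paths (F : Set (SkewShift R[X])) : Set (ℕ → SkewShift R) :=
  (fun f (t : ℕ) => SkewShift.evalAt (t : R) f) '' F

lemma incrementFamily_paths_subset (F : Finset (SkewShift R[X])) (f₀ : SkewShift R[X])
    (N : Finset ℕ) (W : Finset (SkewShift R)) :
    incrementFamily (paths {f ∈ F | f ≠ 1}) (fun t : ℕ => SkewShift.evalAt (t : R) f₀) N W ⊆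
      paths (increments F f₀ N W) := by
  rintro _ ⟨_, ⟨f, ⟨hf, hf1⟩, rfl⟩, T, hT, x, hx, rfl⟩
  refine ⟨f₀.increment f T x, mem_increments.2 ⟨f, hf, hf1, T, hT, x, hx, rfl⟩, funext fun t => ?_⟩
  simp only [SkewShift.evalAt_increment, Nat.cast_add]

lemma evalAt_zero_increment {f₀ : SkewShift R[X]} (h₀ : SkewShift.evalAt 0 f₀ = 1)
    (f : SkewShift R[X]) (T : R) (x : SkewShift R) :
    SkewShift.evalAt 0 (f₀.increment f T x) = 1 := by
  rw [SkewShift.evalAt_increment, h₀]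
  simp

lemma UniformlyRecurrent.paths_of_ne_one {F : Finset (SkewShift R[X])}
    (h : UniformlyRecurrent (paths {f ∈ F | f ≠ 1})) :
    UniformlyRecurrent (paths (F : Set (SkewShift R[X]))) := by
  refine h.insert_one.mono ?_
  rintro _ ⟨f, hf, rfl⟩
  obtain rfl | hf1 := eq_or_ne f 1
  · exact .inl (funext fun t => map_one _)
  · exact .inr ⟨f, ⟨hf, hf1⟩, rfl⟩

/-- PET induction: passing to the increments relative to a path of lowest level
lowers the weight. -/
theorem uniformlyRecurrent_paths (F : Finset (SkewShift R[X]))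
    (hF : ∀ f ∈ F, SkewShift.evalAt 0 f = 1) :
    UniformlyRecurrent (paths (F : Set (SkewShift R[X]))) := by
  induction F using (InvImage.wf weight Multiset.wellFounded_isDershowitzMannaLT).induction with
  | _ F ih
  refine .paths_of_ne_one ?_
  obtain hempty | hne := {f | f ∈ F ∧ f ≠ 1}.eq_empty_or_nonempty
  · rw [hempty, paths, Set.image_empty]
    exact uniformlyRecurrent_empty
  have hfin : {f | f ∈ F ∧ f ≠ 1}.Finite := F.finite_toSet.sep _
  obtain ⟨f₀, ⟨hf₀, hf₀1⟩, hmin⟩ := hfin.exists_minimalFor SkewShift.level _ hne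
  refine uniformlyRecurrent_of_incrementFamily (hfin.image _) ?_
    (f₀ := fun t : ℕ => SkewShift.evalAt (t : R) f₀) fun N W => ?_
  · rintro _ ⟨f, ⟨hf, -⟩, rfl⟩
    simpa using hF f hf
  refine (ih (increments F f₀ N W) ?_ fun g hg => ?_).mono (incrementFamily_paths_subset F f₀ N W)
  · exact weight_increments_lt hF hf₀ hf₀1
      (fun f hf hf1 => (le_total ..).elim id (hmin ⟨hf, hf1⟩)) N W
  · obtain ⟨f, -, -, T, -, x, -, rfl⟩ := mem_increments.1 hg
    exact evalAt_zero_increment (hF f₀ hf₀) f T x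

theorem exists_smul_eq {F : Set (SkewShift R[X])} (hfin : F.Finite)
    (hF : ∀ f ∈ F, SkewShift.evalAt 0 f = 1) {κ : Type*} [Finite κ] (c : R × R → κ) :
    ∃ v, ∃ t : ℕ, 0 < t ∧ ∀ f ∈ F, c (SkewShift.evalAt (t : R) f • v) = c v := by
  lift F to Finset (SkewShift R[X]) using hfin
  obtain ⟨W, N, hN, H⟩ := (uniformlyRecurrent_paths F hF).exists_finset κ
  obtain ⟨x, -, t, ht, hc⟩ := H fun g => c (g • (0, 0))
  refine ⟨x • (0, 0), t, hN t ht, fun f hf => ?_⟩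
  simpa only [mul_smul] using hc _ (Set.mem_image_of_mem _ hf)

end PET

section Differences

open scoped Nat

variable {A : Type*} [CommRing A] {I : Ideal A}

/-- The subgroup generated by the differences `q(X + a) - q(X)` with step `a` in `I`. -/
noncomputable def diffSpan (I : Ideal A) (q : A[X]) : AddSubgroup A[X] :=
  .closure {v | ∃ a ∈ I, taylor a q - q = v}

lemma taylor_sub_mem_diffSpan {a : A} (ha : a ∈ I) (q : A[X]) : taylor a q - q ∈ diffSpan I q :=
  AddSubgroup.subset_closure ⟨a, ha, rfl⟩

lemma diffSpan_taylor_sub_le {a : A} (ha : a ∈ I) (q : A[X]) :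
    diffSpan I (taylor a q - q) ≤ diffSpan I q := by
  rw [diffSpan, AddSubgroup.closure_le]
  rintro _ ⟨b, hb, rfl⟩
  have hsecond : taylor b (taylor a q - q) - (taylor a q - q) =
      (taylor (a + b) q - q) - (taylor b q - q) - (taylor a q - q) := by
    rw [map_sub, taylor_taylor, add_comm b]
    abel
  rw [hsecond]
  exact sub_mem (sub_mem (taylor_sub_mem_diffSpan (add_mem ha hb) q)
    (taylor_sub_mem_diffSpan hb q)) (taylor_sub_mem_diffSpan ha q)

lemma natDegree_taylor_sub_le {n : ℕ} {q : A[X]} (hq : q.natDegree ≤ n + 1) (a : A) :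
    (taylor a q - q).natDegree ≤ n := by
  refine natDegree_le_iff_coeff_eq_zero.2 fun m hm => ?_
  rw [coeff_sub, coeff_taylor_of_natDegree_le (hq.trans hm), sub_self]

lemma coeff_taylor_sub {n : ℕ} {q : A[X]} (hq : q.natDegree ≤ n + 1) (a : A) :
    (taylor a q - q).coeff n = (n + 1) * q.coeff (n + 1) * a := by
  rw [coeff_sub, coeff_taylor_of_natDegree_le_succ hq, add_sub_cancel_left]

lemma C_mem_diffSpan {n : ℕ} {q : A[X]} (hq : q.natDegree ≤ n + 1) {a b : A} (ha : a ∈ I)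
    (hb : b ∈ I) : C ((n + 1)! * q.coeff (n + 1) * a ^ n * b) ∈ diffSpan I q := by
  induction n generalizing q with
  | zero =>
    have hconst := eq_C_of_natDegree_le_zero (natDegree_taylor_sub_le hq b)
    rw [coeff_taylor_sub hq] at hconst
    have := taylor_sub_mem_diffSpan hb q
    rw [hconst] at this
    simpa using this
  | succ n ih =>
    refine diffSpan_taylor_sub_le ha q ?_
    convert ih (natDegree_taylor_sub_le hq a) using 2
    rw [coeff_taylor_sub hq, Nat.factorial_succ (n + 1)]
    push_cast
    ring

end Differences

section Linked

variable {R : Type*} [CommRing R] {p q : R[X]}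

/-- The polynomials in `d` over `R[t]` that vanish at the time `t = 0`. -/
noncomputable def vanishingAtZero (R : Type*) [CommRing R] : Ideal R[X][X] :=
  RingHom.ker (mapRingHom (evalRingHom (0 : R)))

/-- At `v = (a, d)`, the points `a + p(d)` and `a + q(d)` have the same colour. -/
def CollidesAt {K : Type*} (χ : R → K) (p q : R[X]) (v : R × R) : Prop :=
  χ (v.1 + p.eval v.2) = χ (v.1 + q.eval v.2)

/-- A single collision of `p` and `q`, at the image `(a', d')` of `(a, d)` under a path `f` starting
at the identity: in terms of `a`, `d` and the time `t`, the colliding points `a' + p(d')` and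
`a' + q(d')` are `a + S(t, d)` and `a + S'(t, d)`. -/
def LinkStep (p q : R[X]) (S S' : R[X][X]) : Prop :=
  ∃ f : SkewShift R[X], SkewShift.evalAt 0 f = 1 ∧
    f.fiber + taylor f.base (p.map C) = S ∧ f.fiber + taylor f.base (q.map C) = S'

/-- A chain of collisions of `p` and `q`, forcing `a + S(t, d)` and `a + S'(t, d)` to have the same
colour. -/
abbrev Linked (p q : R[X]) : R[X][X] → R[X][X] → Prop := Relation.EqvGen (LinkStep p q)

lemma evalEval_fiber_add_taylor (f : SkewShift R[X]) (p : R[X]) (a d t : R) :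
    a + (f.fiber + taylor f.base (p.map C)).evalEval t d =
      (SkewShift.evalAt t f • (a, d)).1 + p.eval (SkewShift.evalAt t f • (a, d)).2 := by
  rw [SkewShift.evalAt_smul, evalEval_add, ← add_assoc, evalEval, evalEval, taylor_eval, eval_map,
    ← comp, eval_comp]
  simp

lemma Linked.exists_finite {S S' : R[X][X]} (h : Linked p q S S') {K : Type*} (χ : R → K) :
    ∃ F : Set (SkewShift R[X]), F.Finite ∧ (∀ f ∈ F, SkewShift.evalAt 0 f = 1) ∧
      ∀ a d t : R, (∀ f ∈ F, CollidesAt χ p q (SkewShift.evalAt t f • (a, d))) →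
        χ (a + S.evalEval t d) = χ (a + S'.evalEval t d) := by
  induction h with
  | rel S S' h =>
    obtain ⟨f, hf, rfl, rfl⟩ := h
    refine ⟨{f}, Set.finite_singleton f, by simpa using hf, fun a d t hcol => ?_⟩
    rw [evalEval_fiber_add_taylor, evalEval_fiber_add_taylor]
    exact hcol f rfl
  | refl S => exact ⟨∅, Set.finite_empty, by simp, fun _ _ _ _ => rfl⟩
  | symm S S' _ ih =>
    obtain ⟨F, hfin, hF, h⟩ := ih
    exact ⟨F, hfin, hF, fun a d t hcol => (h a d t hcol).symm⟩
  | trans S S' S'' _ _ ih ih' =>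
    obtain ⟨F, hfin, hF, h⟩ := ih
    obtain ⟨F', hfin', hF', h'⟩ := ih'
    refine ⟨F ∪ F', hfin.union hfin', fun f hf => hf.elim (hF f) (hF' f), fun a d t hcol => ?_⟩
    exact (h a d t fun f hf => hcol f (.inl hf)).trans (h' a d t fun f hf => hcol f (.inr hf))

lemma Linked.add_right {S S' r : R[X][X]} (h : Linked p q S S') (hr : r ∈ vanishingAtZero R) :
    Linked p q (S + r) (S' + r) := by
  induction h with
  | rel S S' h =>
    obtain ⟨f, hf, rfl, rfl⟩ := h
    rw [SkewShift.evalAt_eq_one_iff] at hf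
    refine .rel _ _ ⟨⟨f.fiber + r, f.base⟩, SkewShift.evalAt_eq_one_iff.2 ⟨?_, hf.2⟩, ?_, ?_⟩
    · rw [Polynomial.map_add, hf.1, zero_add]
      exact hr
    · exact add_right_comm ..
    · exact add_right_comm ..
  | refl S => exact .refl _
  | symm S S' _ ih => exact ih.symm
  | trans S S' S'' _ _ ih ih' => exact ih.trans _ _ _ ih'

/-- The perturbations of `q` that remain linked to `q`. -/
noncomputable def linkStabilizer (p q : R[X]) : AddSubgroup R[X][X] where
  carrier := {v | v ∈ vanishingAtZero R ∧ Linked p q (q.map C) (q.map C + v)}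
  zero_mem' := ⟨zero_mem _, by rw [add_zero]; exact .refl _⟩
  add_mem' := fun {v w} ⟨hv, hqv⟩ ⟨hw, hqw⟩ => ⟨add_mem hv hw, hqw.trans _ _ _ <| by
    rw [← add_assoc]
    exact hqv.add_right hw⟩
  neg_mem' := fun {v} ⟨hv, hqv⟩ => ⟨neg_mem hv, .symm _ _ <| by
    simpa only [add_neg_cancel_right] using hqv.add_right (neg_mem hv)⟩

lemma taylor_sub_mem_linkStabilizer (p q : R[X]) {s : R[X]} (hs : s.eval 0 = 0) :
    taylor s ((q - p).map C) - (q - p).map C ∈ linkStabilizer p q := by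
  have htaylor (u : R[X]) : (taylor s (u.map C) - u.map C).map (evalRingHom 0) = 0 := by
    rw [Polynomial.map_sub, map_taylor, coe_evalRingHom, hs, taylor_zero, sub_self]
  have hstart : LinkStep p q (p.map C) (q.map C) := ⟨1, map_one _, by simp, by simp⟩
  have hend : LinkStep p q (p.map C) (q.map C + (taylor s ((q - p).map C) - (q - p).map C)) := by
    refine ⟨⟨p.map C - taylor s (p.map C), s⟩, SkewShift.evalAt_eq_one_iff.2 ⟨?_, hs⟩, ?_, ?_⟩
    · rw [← neg_sub, Polynomial.map_neg, htaylor, neg_zero]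
    · exact sub_add_cancel ..
    · rw [Polynomial.map_sub, map_sub]
      ring
  exact ⟨htaylor _, .trans _ _ _ (.symm _ _ (.rel _ _ hstart)) (.rel _ _ hend)⟩

lemma diffSpan_le_linkStabilizer (p q : R[X]) :
    diffSpan (RingHom.ker (evalRingHom (0 : R))) ((q - p).map C) ≤ linkStabilizer p q := by
  rw [diffSpan, AddSubgroup.closure_le]
  rintro _ ⟨s, hs, rfl⟩
  exact taylor_sub_mem_linkStabilizer p q hs

end Linked

section Scale

open scoped Nat

variable {R : Type*} [CommRing R]

/-- The common difference `e(t)` of the monochromatic configuration found at time `t` from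
collisions of `p` and `q`, where `D = q - p`. -/
noncomputable def scale (D : R[X]) : R[X] :=
  C (D.natDegree ! * D.leadingCoeff) * X ^ D.natDegree

lemma natDegree_ne_zero_of_eval_zero {D : R[X]} (hD : D ≠ 0) (h0 : D.eval 0 = 0) :
    D.natDegree ≠ 0 := by
  intro hdeg
  rw [eq_C_of_natDegree_eq_zero hdeg, coeff_zero_eq_eval_zero, h0, C_0] at hD
  exact hD rfl

lemma eval_scale_ne_zero [IsDomain R] [CharZero R] {D : R[X]} (hD : D ≠ 0) {t : R} (ht : t ≠ 0) :
    (scale D).eval t ≠ 0 := by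
  have hfact : (D.natDegree ! : R) ≠ 0 := Nat.cast_ne_zero.2 (Nat.factorial_ne_zero _)
  simp [scale, hfact, hD, ht]

lemma C_comp_scale_mem_diffSpan {D r : R[X]} (hD : D.natDegree ≠ 0) (hr : r.eval 0 = 0) :
    C (r.comp (scale D)) ∈ diffSpan (RingHom.ker (evalRingHom (0 : R))) (D.map C) := by
  obtain ⟨n, hn⟩ := Nat.exists_eq_succ_of_ne_zero hD
  obtain ⟨s, rfl⟩ := X_dvd_iff.2 (coeff_zero_eq_eval_zero r ▸ hr)
  have hX : (X : R[X]) ∈ RingHom.ker (evalRingHom (0 : R)) := by simp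
  convert C_mem_diffSpan (natDegree_map_le.trans hn.le) hX
    (Ideal.mul_mem_right (s.comp (scale D)) _ hX) using 2
  have hscale : scale D = C ((n + 1)! * D.coeff (n + 1)) * X ^ (n + 1) := by
    rw [scale, leadingCoeff, hn]
  rw [mul_comp, X_comp, coeff_map]
  nth_rw 1 [hscale]
  simp only [C_mul, map_natCast, pow_succ]
  ring

lemma linked_add_C_comp_scale {p q r : R[X]} (hpq : (q - p).natDegree ≠ 0) (hr : r.eval 0 = 0) :
    Linked p q (q.map C) (q.map C + C (r.comp (scale (q - p)))) :=
  (diffSpan_le_linkStabilizer p q (C_comp_scale_mem_diffSpan hpq hr)).2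

lemma exists_finite_forall_eq_of_collision {p q r : R[X]} (hpq : (q - p).natDegree ≠ 0)
    (hr : r.eval 0 = 0) {K : Type*} (χ : R → K) :
    ∃ F : Set (SkewShift R[X]), F.Finite ∧ (∀ f ∈ F, SkewShift.evalAt 0 f = 1) ∧
      ∀ a d t : R, (∀ f ∈ F, CollidesAt χ p q (SkewShift.evalAt t f • (a, d))) →
        χ (a + q.eval d + r.eval ((scale (q - p)).eval t)) = χ (a + q.eval d) := by
  obtain ⟨F, hfin, hF, h⟩ := (linked_add_C_comp_scale hpq hr).exists_finite χ
  refine ⟨F, hfin, hF, fun a d t hcol => ?_⟩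
  simpa [← add_assoc, evalEval_map_C, evalEval_C, eval_comp] using (h a d t hcol).symm

end Scale

section Main

variable {R : Type*} [CommRing R] [IsDomain R] [CharZero R] {ι K : Type*} [Finite ι]

lemma exists_monochromatic_of_collisions {p : ι → R[X]} (hp0 : ∀ i, (p i).eval 0 = 0)
    (hp : Function.Injective p) (χ : R → K) (c : R × R → {e : ι × ι // e.1 ≠ e.2})
    (hc : ∀ v, CollidesAt χ (p (c v).1.1) (p (c v).1.2) v) :
    ∃ a d : R, d ≠ 0 ∧ ∀ i, χ (a + (p i).eval d) = χ a := by
  have hdeg (e : {e : ι × ι // e.1 ≠ e.2}) : (p e.1.2 - p e.1.1).natDegree ≠ 0 :=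
    natDegree_ne_zero_of_eval_zero (sub_ne_zero.2 (hp.ne e.2.symm)) (by simp [hp0])
  choose F hfin hF hcol using fun e i =>
    exists_finite_forall_eq_of_collision (hdeg e) (hp0 i) χ
  obtain ⟨⟨a, d⟩, t, ht, hmono⟩ := exists_smul_eq
    (Set.finite_iUnion fun e => Set.finite_iUnion (hfin e))
    (fun f hf => let ⟨e, i, hf⟩ := Set.mem_iUnion₂.1 hf; hF e i f hf) c
  set e := c (a, d)
  refine ⟨a + (p e.1.2).eval d, (scale (p e.1.2 - p e.1.1)).eval t, ?_, fun i => ?_⟩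
  · exact eval_scale_ne_zero (sub_ne_zero.2 (hp.ne e.2.symm)) (Nat.cast_ne_zero.2 ht.ne')
  · refine hcol e i a d t fun f hf => ?_
    have hcolour := hmono f (Set.mem_iUnion₂.2 ⟨e, i, hf⟩)
    simpa only [hcolour] using hc (SkewShift.evalAt (t : R) f • (a, d))

theorem exists_monochromatic_or_rainbow {p : ι → R[X]} (hp0 : ∀ i, (p i).eval 0 = 0)
    (hp : Function.Injective p) (χ : R → K) :
    ∃ a d : R, d ≠ 0 ∧ ((∀ i, χ (a + (p i).eval d) = χ a) ∨
      Function.Injective fun i => χ (a + (p i).eval d)) := by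
  by_contra! hno
  obtain _ | _ := subsingleton_or_nontrivial ι
  · exact (hno 0 1 one_ne_zero).2 (Function.injective_of_subsingleton _)
  have hcollision (v : R × R) : ∃ e : {e : ι × ι // e.1 ≠ e.2},
      CollidesAt χ (p e.1.1) (p e.1.2) v := by
    obtain hd | hd := eq_or_ne v.2 0
    · obtain ⟨i, j, hij⟩ := exists_pair_ne ι
      exact ⟨⟨(i, j), hij⟩, by simp [CollidesAt, hd, hp0]⟩
    · obtain ⟨i, j, heq, hij⟩ := Function.not_injective_iff.1 (hno v.1 v.2 hd).2
      exact ⟨⟨(i, j), hij⟩, heq⟩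
  choose c hc using hcollision
  obtain ⟨a, d, hd, hmono⟩ := exists_monochromatic_of_collisions hp0 hp χ c hc
  obtain ⟨i, hi⟩ := (hno a d hd).1
  exact hi (hmono i)

end Main

end PolynomialVdW

theorem canonical_polynomial_vdw_general {R ι C : Type*} [CommRing R] [IsDomain R] [CharZero R]
    [Finite ι] (p : ι → Polynomial R) (hp0 : ∀ i, (p i).eval 0 = 0) (hpne : ∀ i, p i ≠ 0)
    (hpdist : ∀ i j, i ≠ j → p i ≠ p j) (χ : R → C) :
    ∃ a d : R, d ≠ 0 ∧
      ((∀ i, χ (a + (p i).eval d) = χ a) ∨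
       ((Function.Injective fun i => a + (p i).eval d) ∧
        (∀ i, a + (p i).eval d ≠ a) ∧
        (Function.Injective fun i => χ (a + (p i).eval d)) ∧
        (∀ i, χ (a + (p i).eval d) ≠ χ a))) := by
  have hP0 (o : Option ι) : (o.elim 0 p).eval 0 = 0 := by
    cases o <;> simp [hp0]
  have hP : Function.Injective fun o : Option ι => o.elim 0 p :=
    Option.injective_iff.2 ⟨fun i j => not_imp_not.1 (hpdist i j), by simpa using hpne⟩
  obtain ⟨a, d, hd, hmono | hrainbow⟩ := PolynomialVdW.exists_monochromatic_or_rainbow hP0 hP χ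
  · exact ⟨a, d, hd, .inl fun i => hmono (some i)⟩
  · have hinj : Function.Injective fun i => χ (a + (p i).eval d) :=
      hrainbow.comp (Option.some_injective ι)
    have hne (i : ι) : χ (a + (p i).eval d) ≠ χ a := by
      simpa using hrainbow.ne (Option.some_ne_none i)
    exact ⟨a, d, hd, .inr ⟨.of_comp (f := χ) hinj, fun i h => hne i (congrArg χ h), hinj, hne⟩⟩

/-- **Canonical polynomial Van der Waerden theorem.**
Let `p 1, ..., p k` be pairwise distinct nonzero integral polynomials (integer
coefficients, vanishing at `0`).  Then for every colouring `χ : ℤ → C` with an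
arbitrary (possibly infinite) set of colours `C`, there exist `a d : ℤ` with
`d ≠ 0` such that either `χ` takes the same value on all of
`a, a + p 1 d, ..., a + p k d` (monochromatic), or these integers are pairwise
distinct and `χ` takes pairwise distinct values on them (rainbow). -/
theorem canonical_polynomial_vdw {k : ℕ} (p : Fin k → Polynomial ℤ)
    (hp0 : ∀ i, (p i).eval 0 = 0) (hpne : ∀ i, p i ≠ 0)
    (hpdist : ∀ i j, i ≠ j → p i ≠ p j)
    {C : Type*} (χ : ℤ → C) :
    ∃ a d : ℤ, d ≠ 0 ∧
      ((∀ i : Fin k, χ (a + (p i).eval d) = χ a) ∨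
       ((Function.Injective fun i : Fin k => a + (p i).eval d) ∧
        (∀ i : Fin k, a + (p i).eval d ≠ a) ∧
        (Function.Injective fun i : Fin k => χ (a + (p i).eval d)) ∧
        (∀ i : Fin k, χ (a + (p i).eval d) ≠ χ a))) := by
  exact canonical_polynomial_vdw_general p hp0 hpne hpdist χ
end

section
/- Let h, k, k', m, n ∈ ℕ, let 𝒜 = {p_1, ..., p_k} be a set of integral polynomials, and let ℬ = {p'_1, ..., p'_{k'}} be a set of pairwise distinct nonzero integral polynomials. Then there exists N ∈ ℕ such that for every (m,n)-type colouring Δ of {1,...,N}, at least one of the following holds: (i) there exist a ∈ ℤ and d ≠ 0 such that {a, a+p_1(d), ..., a+p_k(d)} ⊆ {1,...,N} and this set is monochromatic with respect to Δ; or (ii) there exist a' ∈ ℤ and d' > h such that {a', a'+p'_1(d'), ..., a'+p'_{k'}(d')} ⊆ {1,...,N} and this set is fully-rainbow with respect to Δ. -/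
/-!
Both van der Waerden statements are proved by PET induction on the weight of a family `B`. Fix
`p₁ ∈ B` of least degree. The polynomials `p(x + g) - p(g) - p₁(x)` have smaller weight for every
finite set of shifts `g`, and a configuration of them at `b` with difference `d` gives for each `g`
a configuration of `B` at `b - p₁(d)` with difference `d + g`. Colouring a point by the colours of a
whole window around it lets the finitary theorem focus one more colour at each round.

In the canonical setting the colours of a window are unbounded in number, so the reduced family is
made rainbow for the windows and constant only for their patterns of coincidences. Points reached
through different reduced polynomials then differ because their windows do; points reached through
the same one lie in a single window, and there the shifts can be chosen apart, unless some
coordinate is constant on a configuration of `A`. With more shifts than coordinates, one of them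
gives points that all avoid the colours of the base point.

The extra coordinate is only of finite type, but is to be constant while the induction is running.
Replacing `p(x)` by `p(X x)` over `R[X]` keeps the weight, and a finite window in `R[X]` becomes
monochromatic in the extra coordinate on substituting for `X` a difference `l` supplied by the
finitary theorem. This is why the induction ranges over all domains of characteristic zero.
-/

namespace CanonicalPolynomialVdW

open Polynomial Pointwise

universe u v

section Weight

variable {R : Type*} [Semiring R]

/-- The families to which polynomial exhaustion applies: finitely many nonzero polynomials
without constant term. -/
def IsAdmissible (B : Finset R[X]) : Prop :=
  ∀ p ∈ B, p ≠ 0 ∧ p.eval 0 = 0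

theorem natDegree_pos_of_eval_zero {p : R[X]} (hp : p ≠ 0) (h0 : p.eval 0 = 0) :
    0 < p.natDegree := by
  rw [Nat.pos_iff_ne_zero]
  intro hdeg
  refine hp ?_
  rw [eq_C_of_natDegree_eq_zero hdeg, coeff_zero_eq_eval_zero, h0, C_0]

theorem eval_eq_leadingCoeff_mul {p : R[X]} (hp : p.natDegree = 1) (h0 : p.eval 0 = 0) (x : R) :
    p.eval x = p.leadingCoeff * x := by
  rw [leadingCoeff, hp]
  conv_lhs => rw [eq_X_add_C_of_natDegree_le_one hp.le, coeff_zero_eq_eval_zero, h0]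
  simp

open scoped Classical in
/-- The set of leading coefficients of the members of `B` of degree `D`. -/
noncomputable def leadingCoeffs (B : Finset R[X]) (D : ℕ) : Finset R :=
  {p ∈ B | p.natDegree = D}.image leadingCoeff

theorem mem_leadingCoeffs {B : Finset R[X]} {D : ℕ} {x : R} :
    x ∈ leadingCoeffs B D ↔ ∃ p ∈ B, p.natDegree = D ∧ p.leadingCoeff = x := by
  simp [leadingCoeffs, and_assoc]

open scoped Classical in
/-- The PET weight of a family: the number of distinct leading coefficients in each degree.
Weights are compared at the highest degree at which they differ, hence `Colex`. -/
noncomputable def weight (B : Finset R[X]) : Colex (ℕ →₀ ℕ) :=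
  toColex <| Finsupp.onFinset (B.image natDegree) (fun D => (leadingCoeffs B D).card) fun D hD => by
    obtain ⟨_, hx⟩ := Finset.card_ne_zero.1 hD
    obtain ⟨p, hp, hpD, _⟩ := mem_leadingCoeffs.1 hx
    exact Finset.mem_image.2 ⟨p, hp, hpD⟩

theorem weight_lt_weight {B B' : Finset R[X]} {D : ℕ}
    (hgt : ∀ E, D < E → (leadingCoeffs B E).card = (leadingCoeffs B' E).card)
    (hD : (leadingCoeffs B D).card < (leadingCoeffs B' D).card) : weight B < weight B' :=
  Finsupp.Colex.lt_iff.2 ⟨D, hgt, hD⟩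

theorem weight_eq_weight {R' : Type*} [Semiring R'] {B : Finset R[X]} {B' : Finset R'[X]}
    (h : ∀ D, (leadingCoeffs B D).card = (leadingCoeffs B' D).card) : weight B = weight B' :=
  congrArg toColex (Finsupp.ext h)

end Weight

section Reduction

variable {R : Type*} [CommRing R]

/-- The polynomial `p(x + g) - p(g)`, by which `p` moves on once its argument has reached `g`. -/
noncomputable def shift (g : R) (p : R[X]) : R[X] :=
  taylor g p - C (p.eval g)

theorem eval_shift (g x : R) (p : R[X]) : (shift g p).eval x = p.eval (x + g) - p.eval g := by
  simp [shift, taylor_eval]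

theorem natDegree_shift (g : R) (p : R[X]) : (shift g p).natDegree = p.natDegree := by
  rw [shift, natDegree_sub_C, natDegree_taylor]

theorem coeff_shift (g : R) (p : R[X]) {k : ℕ} (hk : 0 < k) :
    (shift g p).coeff k = (taylor g p).coeff k := by
  rw [shift, coeff_sub, coeff_C_of_ne_zero hk.ne', sub_zero]

theorem leadingCoeff_shift (g : R) {p : R[X]} (hp : 0 < p.natDegree) :
    (shift g p).leadingCoeff = p.leadingCoeff := by
  rw [leadingCoeff, natDegree_shift, coeff_shift g p hp, coeff_taylor_natDegree]

theorem shift_injOn (g : R) : Set.InjOn (shift g) {p : R[X] | p.eval 0 = 0} := by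
  intro p hp q hq h
  have heval : p.eval g = q.eval g := by
    have := congrArg (eval (-g)) h
    rw [eval_shift, eval_shift, neg_add_cancel, hp, hq] at this
    simpa using this
  refine taylor_injective g ?_
  simpa [shift, heval] using h

theorem finite_setOf_shift_eq [IsDomain R] [CharZero R] {q : R[X]} (hq : 1 < q.natDegree)
    (r : R[X]) : {g : R | shift g q = r}.Finite := by
  have hne : derivative q - C (r.coeff 1) ≠ 0 := by
    intro h
    have hdeg := natDegree_derivative q
    rw [sub_eq_zero.1 h, natDegree_C] at hdeg
    omega
  refine (finite_setOfPred_isRoot hne).subset ?_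
  rintro g rfl
  simp [coeff_shift]

open scoped Classical in
/-- The PET reduction of `B`: the nonzero polynomials `p(x + g) - p(g) - p₁(x)` with `p ∈ B` and
`g ∈ G`. -/
noncomputable def reduce (B : Finset R[X]) (p₁ : R[X]) (G : Finset R) : Finset R[X] :=
  (Finset.image₂ (fun p g => shift g p - p₁) B G).erase 0

variable {B : Finset R[X]} {p₁ : R[X]} {G : Finset R}

theorem mem_reduce {q : R[X]} :
    q ∈ reduce B p₁ G ↔ q ≠ 0 ∧ ∃ p ∈ B, ∃ g ∈ G, shift g p - p₁ = q := by
  simp [reduce]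

theorem shift_sub_mem_insert_reduce {p : R[X]} {g : R} (hp : p ∈ B) (hg : g ∈ G) :
    shift g p - p₁ ∈ insert 0 (reduce B p₁ G : Set R[X]) := by
  rw [Set.mem_insert_iff, or_iff_not_imp_left]
  exact fun hne => mem_reduce.2 ⟨hne, p, hp, g, hg, rfl⟩

theorem isAdmissible_reduce (hp₁ : p₁.eval 0 = 0) : IsAdmissible (reduce B p₁ G) := by
  intro q hq
  obtain ⟨hne, p, _, g, _, rfl⟩ := mem_reduce.1 hq
  exact ⟨hne, by simp [eval_shift, hp₁]⟩

theorem natDegree_shift_sub {p : R[X]} (h : p₁.natDegree < p.natDegree) (g : R) :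
    (shift g p - p₁).natDegree = p.natDegree := by
  rw [← natDegree_shift g p] at h
  rw [natDegree_sub_eq_left_of_natDegree_lt h, natDegree_shift]

theorem leadingCoeff_shift_sub {p : R[X]} (h : p₁.natDegree < p.natDegree) (g : R) :
    (shift g p - p₁).leadingCoeff = p.leadingCoeff := by
  have hdeg : p₁.natDegree < (shift g p).natDegree := by rwa [natDegree_shift]
  rw [leadingCoeff_sub_of_degree_lt (degree_lt_degree hdeg), leadingCoeff_shift g (by omega)]

theorem leadingCoeffs_reduce (hG : G.Nonempty) {D : ℕ} (hD : p₁.natDegree < D) :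
    leadingCoeffs (reduce B p₁ G) D = leadingCoeffs B D := by
  ext x
  simp only [mem_leadingCoeffs]
  constructor
  · rintro ⟨q, hq, hqD, rfl⟩
    obtain ⟨_, p, hp, g, _, rfl⟩ := mem_reduce.1 hq
    have hlt : p₁.natDegree < p.natDegree := by
      by_contra! hle
      have := natDegree_sub_le (shift g p) p₁
      rw [natDegree_shift] at this
      omega
    exact ⟨p, hp, by rw [← hqD, natDegree_shift_sub hlt], (leadingCoeff_shift_sub hlt g).symm⟩
  · rintro ⟨p, hp, rfl, rfl⟩
    obtain ⟨g, hg⟩ := hG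
    refine ⟨shift g p - p₁, mem_reduce.2 ⟨?_, p, hp, g, hg, rfl⟩, natDegree_shift_sub hD g,
      leadingCoeff_shift_sub hD g⟩
    refine ne_zero_of_natDegree_gt (n := p₁.natDegree) ?_
    rwa [natDegree_shift_sub hD]

theorem leadingCoeffs_reduce_subset [DecidableEq R] (hdeg : 0 < p₁.natDegree)
    (hmin : ∀ p ∈ B, p₁.natDegree ≤ p.natDegree) :
    leadingCoeffs (reduce B p₁ G) p₁.natDegree ⊆
      ((leadingCoeffs B p₁.natDegree).erase p₁.leadingCoeff).image (· - p₁.leadingCoeff) := by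
  intro x hx
  obtain ⟨q, hq, hqD, rfl⟩ := mem_leadingCoeffs.1 hx
  obtain ⟨hne, p, hp, g, _, rfl⟩ := mem_reduce.1 hq
  have heq : p.natDegree = p₁.natDegree := by
    refine (hmin p hp).eq_or_lt.elim Eq.symm fun hlt => ?_
    rw [← hqD, natDegree_shift_sub hlt]
  have hlead : (shift g p - p₁).leadingCoeff = p.leadingCoeff - p₁.leadingCoeff := by
    rw [leadingCoeff, hqD, coeff_sub, coeff_shift g p hdeg, coeff_natDegree, ← heq,
      coeff_taylor_natDegree]
  rw [hlead]
  refine Finset.mem_image_of_mem _ (Finset.mem_erase.2 ⟨?_, mem_leadingCoeffs.2 ⟨p, hp, heq, rfl⟩⟩)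
  rwa [← sub_ne_zero, ← hlead, leadingCoeff_ne_zero]

theorem weight_reduce_lt (hB : IsAdmissible B) (hp₁ : p₁ ∈ B)
    (hmin : ∀ p ∈ B, p₁.natDegree ≤ p.natDegree) (hG : G.Nonempty) :
    weight (reduce B p₁ G) < weight B := by
  classical
  have hdeg := natDegree_pos_of_eval_zero (hB p₁ hp₁).1 (hB p₁ hp₁).2
  refine weight_lt_weight (D := p₁.natDegree)
    (fun D hD => by rw [leadingCoeffs_reduce hG hD]) ?_
  calc (leadingCoeffs (reduce B p₁ G) p₁.natDegree).card
      ≤ ((leadingCoeffs B p₁.natDegree).erase p₁.leadingCoeff).card :=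
        (Finset.card_le_card (leadingCoeffs_reduce_subset hdeg hmin)).trans Finset.card_image_le
    _ < (leadingCoeffs B p₁.natDegree).card :=
        Finset.card_erase_lt_of_mem (mem_leadingCoeffs.2 ⟨p₁, hp₁, rfl, rfl⟩)

end Reduction

section Configuration

variable {R R' κ κ' : Type*} [Semiring R] [Semiring R']

/-- The points `a + p(d)` with `p ∈ B` lie in the window `S` and all have colour `k`. The
difference `d` lies in `S` too, so that one finite set bounds all the data, and avoids `H`. The base
point `a` lies in `S`, but its colour is free, so that the notion also covers configurations focused
at a point of another colour. -/
structure IsMonoConfig (c : R → κ) (k : κ) (B : Finset R[X]) (H S : Finset R) (a d : R) : Prop where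
  base_mem : a ∈ S
  diff_mem : d ∈ S
  diff_notMem : d ∉ H
  eval_mem : ∀ p ∈ B, a + p.eval d ∈ S
  color_eq : ∀ p ∈ B, c (a + p.eval d) = k

namespace IsMonoConfig

variable {c : R → κ} {k : κ} {B : Finset R[X]} {H S : Finset R} {a d : R}

theorem map {θ : R' → R} {B' : Finset R'[X]} {H' S' : Finset R'} {a d : R'} {e : R}
    (h : IsMonoConfig (fun x => c (θ x)) k B' H' S' a d) (hθ : ∀ x ∈ S', θ x ∈ S)
    (he : e ∈ S) (heH : e ∉ H)
    (hB : ∀ p ∈ B, ∃ q ∈ B', θ (a + q.eval d) = θ a + p.eval e) :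
    IsMonoConfig c k B H S (θ a) e where
  base_mem := hθ a h.base_mem
  diff_mem := he
  diff_notMem := heH
  eval_mem p hp := by
    obtain ⟨q, hq, heq⟩ := hB p hp
    exact heq ▸ hθ _ (h.eval_mem q hq)
  color_eq p hp := by
    obtain ⟨q, hq, heq⟩ := hB p hp
    exact heq ▸ h.color_eq q hq

theorem recolor {c' : R → κ'} {k' : κ'} (h : IsMonoConfig c k B H S a d)
    (hc : ∀ x ∈ S, c x = k → c' x = k') : IsMonoConfig c' k' B H S a d where
  __ := h
  color_eq p hp := hc _ (h.eval_mem p hp) (h.color_eq p hp)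

theorem translate {b : R} (h : IsMonoConfig (fun x => c (b + x)) k B H S a d) {S' : Finset R}
    (hS : ∀ x ∈ S, b + x ∈ S') (hd : d ∈ S') : IsMonoConfig c k B H S' (b + a) d :=
  h.map (θ := (b + ·)) hS hd h.diff_notMem fun p hp => ⟨p, hp, (add_assoc ..).symm⟩

theorem eval_insert_zero (h : IsMonoConfig c (c a) B H S a d) {p : R[X]}
    (hp : p ∈ insert 0 (B : Set R[X])) : a + p.eval d ∈ S ∧ c (a + p.eval d) = c a := by
  obtain rfl | hp := hp
  · simpa using h.base_mem
  · exact ⟨h.eval_mem p hp, h.color_eq p hp⟩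

end IsMonoConfig

end Configuration

section PolynomialVdW

variable {R : Type u} [CommRing R] {B : Finset R[X]} {p₁ : R[X]}

/-- `B` satisfies the finite polynomial van der Waerden theorem over `R`: for each finite set of
colours and each finite set `H` of forbidden differences there is a window in which every colouring
has a monochromatic configuration, base point included. -/
def IsPartitionRegular (B : Finset R[X]) : Prop :=
  ∀ (κ : Type u) [Finite κ] (H : Finset R), ∃ S : Finset R, ∀ c : R → κ,
    ∃ a d, IsMonoConfig c (c a) B H S a d

/-- Colour focusing: `r` monochromatic configurations in distinct colours share a base point,
whose colour is none of these. -/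
def HasFocused {κ : Type*} (c : R → κ) (B : Finset R[X]) (H S : Finset R) (r : ℕ) : Prop :=
  ∃ a ∈ S, ∃ K : Finset κ, K.card = r ∧ c a ∉ K ∧ ∀ k ∈ K, ∃ d, IsMonoConfig c k B H S a d

theorem sub_eval_add_eval_add (p p₁ : R[X]) (b d g : R) :
    b - p₁.eval d + p.eval (d + g) = b + (shift g p - p₁).eval d + p.eval g := by
  rw [eval_sub, eval_shift]
  ring

theorem IsMonoConfig.of_window [DecidableEq R] {κ : Type*} {c : R → κ} {H S T : Finset R} {b d : R}
    (h : IsMonoConfig (fun x (w : S) => c (x + w)) (fun w => c (b + w)) (reduce B p₁ (insert 0 S))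
      (H - insert 0 S) T b d)
    {a e : R} {k : κ} (ha : a ∈ S) (he : e ∈ insert 0 S) (hmem : ∀ p ∈ B, a + p.eval e ∈ S)
    (hcol : ∀ p ∈ B, c (b + (a + p.eval e)) = k) :
    IsMonoConfig c k B H (S ∪ (T + insert 0 S) ∪ (T + S - T.image p₁.eval))
      (b + a - p₁.eval d) (d + e) := by
  have hwin (p) (hp : p ∈ B) := h.eval_insert_zero (shift_sub_mem_insert_reduce (p₁ := p₁) hp he)
  have heq (p : R[X]) : b + a - p₁.eval d + p.eval (d + e) =
      b + (shift e p - p₁).eval d + (a + p.eval e) := by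
    linear_combination sub_eval_add_eval_add p p₁ b d e
  refine ⟨?_, ?_, ?_, fun p hp => ?_, fun p hp => ?_⟩
  · exact Finset.mem_union_right _ (Finset.sub_mem_sub (Finset.add_mem_add h.base_mem ha)
      (Finset.mem_image_of_mem _ h.diff_mem))
  · exact Finset.mem_union_left _ (Finset.mem_union_right _ (Finset.add_mem_add h.diff_mem he))
  · exact fun hH => h.diff_notMem (Finset.mem_sub.2 ⟨d + e, hH, e, he, by ring⟩)
  · rw [heq]
    exact Finset.mem_union_left _ (Finset.mem_union_right _ (Finset.add_mem_add (hwin p hp).1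
      (Finset.mem_insert_of_mem (hmem p hp))))
  · rw [heq, ← hcol p hp]
    exact congrFun (hwin p hp).2 ⟨_, hmem p hp⟩

theorem exists_hasFocused_succ [DecidableEq R] {κ : Type*} {H S T : Finset R} {r : ℕ}
    (hB : ∀ p ∈ B, p.eval 0 = 0)
    (hT : ∀ c : R → S → κ, ∃ b d,
      IsMonoConfig c (c b) (reduce B p₁ (insert 0 S)) (H - insert 0 S) T b d)
    (hS : ∀ c : R → κ, (∃ a d, IsMonoConfig c (c a) B H S a d) ∨ HasFocused c B H S r) :
    ∃ S' : Finset R, ∀ c : R → κ,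
      (∃ a d, IsMonoConfig c (c a) B H S' a d) ∨ HasFocused c B H S' (r + 1) := by
  classical
  refine ⟨S ∪ (T + insert 0 S) ∪ (T + S - T.image p₁.eval), fun c => ?_⟩
  obtain ⟨b, d, hbd⟩ := hT fun x w => c (x + w)
  obtain ⟨a, e, hae⟩ | ⟨a, ha, K, hK, haK, hfoc⟩ := hS fun x => c (b + x)
  · refine .inl ⟨b + a, e, hae.translate (fun x hx => ?_) ?_⟩
    · exact Finset.mem_union_left _ (Finset.mem_union_right _ (Finset.add_mem_add hbd.base_mem
        (Finset.mem_insert_of_mem hx)))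
    · exact Finset.mem_union_left _ (Finset.mem_union_left _ hae.diff_mem)
  have hlift : ∀ k ∈ insert (c (b + a)) K, ∃ e, IsMonoConfig c k B H
      (S ∪ (T + insert 0 S) ∪ (T + S - T.image p₁.eval)) (b + a - p₁.eval d) e := by
    intro k hk
    obtain rfl | hk := Finset.mem_insert.1 hk
    · -- the shift `0` keeps the old focus, which thereby contributes a new colour
      exact ⟨_, hbd.of_window ha (Finset.mem_insert_self 0 S)
        (fun p hp => by rwa [hB p hp, add_zero]) fun p hp => by rw [hB p hp, add_zero]⟩
    · obtain ⟨e, he⟩ := hfoc k hk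
      exact ⟨_, hbd.of_window ha (Finset.mem_insert_of_mem he.diff_mem) he.eval_mem he.color_eq⟩
  by_cases hc : c (b + a - p₁.eval d) ∈ insert (c (b + a)) K
  · obtain ⟨e, he⟩ := hlift _ hc
    exact .inl ⟨_, e, he⟩
  · obtain ⟨e, he⟩ := hlift _ (Finset.mem_insert_self _ K)
    exact .inr ⟨_, he.base_mem, _, by rw [Finset.card_insert_of_notMem haK, hK], hc, hlift⟩

theorem isPartitionRegular_empty [Infinite R] :
    IsPartitionRegular (∅ : Finset R[X]) := by
  intro κ _ H
  obtain ⟨d, hd⟩ := Infinite.exists_notMem_finset H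
  exact ⟨{d}, fun c => ⟨d, d, by simp, by simp, hd, by simp, by simp⟩⟩

theorem IsPartitionRegular.of_reduce (hB : ∀ p ∈ B, p.eval 0 = 0)
    (hred : ∀ G : Finset R, G.Nonempty → IsPartitionRegular (reduce B p₁ G)) :
    IsPartitionRegular B := by
  classical
  intro κ _ H
  have hfoc : ∀ r, ∃ S : Finset R, ∀ c : R → κ,
      (∃ a d, IsMonoConfig c (c a) B H S a d) ∨ HasFocused c B H S r := by
    intro r
    induction r with
    | zero => exact ⟨{0}, fun c => .inr ⟨0, by simp, ∅, by simp⟩⟩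
    | succ r ih =>
      obtain ⟨S, hS⟩ := ih
      obtain ⟨T, hT⟩ := hred (insert 0 S) (Finset.insert_nonempty 0 S) (S → κ) (H - insert 0 S)
      exact exists_hasFocused_succ hB hT hS
  obtain ⟨S, hS⟩ := hfoc (Nat.card κ + 1)
  refine ⟨S, fun c => (hS c).resolve_right ?_⟩
  rintro ⟨_, _, K, hK, _⟩
  have := Fintype.ofFinite κ
  have := K.card_le_univ
  rw [Nat.card_eq_fintype_card] at hK
  omega

theorem IsAdmissible.isPartitionRegular [Infinite R] (hB : IsAdmissible B) :
    IsPartitionRegular B := by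
  induction hw : weight B using WellFoundedLT.induction generalizing B with
  | _ w ih =>
    obtain rfl | hne := B.eq_empty_or_nonempty
    · exact isPartitionRegular_empty
    obtain ⟨p₁, hp₁, hmin⟩ := Finset.exists_min_image B natDegree hne
    exact .of_reduce (fun p hp => (hB p hp).2) fun G hG =>
      ih _ (hw ▸ weight_reduce_lt hB hp₁ hmin hG) (isAdmissible_reduce (hB p₁ hp₁).2) rfl

theorem isPartitionRegular [Infinite R] (hB : ∀ p ∈ B, p.eval 0 = 0) :
    IsPartitionRegular B := by
  classical
  intro κ _ H
  have hB' : IsAdmissible (B.erase 0) := fun p hp =>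
    ⟨Finset.ne_of_mem_erase hp, hB p (Finset.mem_of_mem_erase hp)⟩
  obtain ⟨S, hS⟩ := hB'.isPartitionRegular κ H
  refine ⟨S, fun c => ?_⟩
  obtain ⟨a, d, h⟩ := hS c
  have hmem (p) (hp : p ∈ B) := h.eval_insert_zero (p := p) (by simp [hp])
  exact ⟨a, d, h.base_mem, h.diff_mem, h.diff_notMem, fun p hp => (hmem p hp).1,
    fun p hp => (hmem p hp).2⟩

end PolynomialVdW

section Canonical

/-- Some coordinate of `Δ` is constant on a configuration of `A` in `S` with nonzero difference,
base point included. -/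
def HasMonochromatic {R ι α : Type*} [Semiring R] (Δ : R → ι → α) (A : Finset R[X])
    (S : Finset R) : Prop :=
  ∃ j a d, IsMonoConfig (fun x => Δ x j) (Δ a j) A {0} S a d

theorem HasMonochromatic.mono {R ι α : Type*} [Semiring R] {Δ : R → ι → α} {A : Finset R[X]}
    {S S' : Finset R} (h : HasMonochromatic Δ A S) (hS : S ⊆ S') :
    HasMonochromatic Δ A S' := by
  obtain ⟨j, a, d, h⟩ := h
  exact ⟨j, a, d, h.map (θ := id) hS (hS h.diff_mem) h.diff_notMem fun p hp => ⟨p, hp, rfl⟩⟩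

/-- Some configuration of `B` in `S` is constant for `c`, while distinct points share no value of
`Δ`, even between different coordinates. Points are indexed by polynomials, the base point by
`0`. -/
def HasRainbow {R ι α κ : Type*} [Semiring R] (Δ : R → ι → α) (c : R → κ) (B : Finset R[X])
    (H S : Finset R) : Prop :=
  ∃ a d, IsMonoConfig c (c a) B H S a d ∧
    (insert 0 (B : Set R[X])).PairwiseDisjoint fun p => Set.range (Δ (a + p.eval d))

/-- `B` satisfies the canonical theorem over `R` with coordinates valued in `α` and last coordinate
valued in `κ`, simultaneously for all families `A` without constant terms. The version without a
last coordinate is `κ = PUnit`. -/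
def IsCanonical {R : Type u} [Semiring R] (α : Type v) (κ : Type u) (B : Finset R[X]) : Prop :=
  ∀ (ι : Type u) [Finite ι] (A : Finset R[X]), (∀ p ∈ A, p.eval 0 = 0) → ∀ H : Finset R,
    ∃ S : Finset R, ∀ (Δ : R → ι → α) (c : R → κ), HasMonochromatic Δ A S ∨ HasRainbow Δ c B H S

theorem isCanonical_empty {R : Type u} [CommRing R] [Infinite R] (α : Type v) (κ : Type u) :
    IsCanonical α κ (∅ : Finset R[X]) := by
  intro _ _ _ _ H
  obtain ⟨d, hd⟩ := Infinite.exists_notMem_finset H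
  exact ⟨{d}, fun _ _ => .inr ⟨d, d, ⟨by simp, by simp, hd, by simp, by simp⟩, by simp⟩⟩

end Canonical

section Separation

variable {R : Type u} [CommRing R] {α : Type v} {ι : Type u}

theorem exists_forall_mul_eval_eq {p : R[X]} (h0 : p.eval 0 = 0) (s e : R) :
    ∃ q : R[X], q.eval 0 = 0 ∧ ∀ x, s * q.eval x = p.eval (s * e * x) := by
  refine ⟨C e * X * (divX p).comp (C (s * e) * X), by simp, fun x => ?_⟩
  conv_rhs => rw [← divX_mul_X_add p, coeff_zero_eq_eval_zero, h0]
  simp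
  ring

theorem exists_family_mul_eval_eq [IsDomain R] {A : Finset R[X]} (hA : ∀ p ∈ A, p.eval 0 = 0)
    {L : Finset R} (hL : 0 ∉ L) :
    ∃ E ≠ 0, ∃ F : Finset R[X], (∀ q ∈ F, q.eval 0 = 0) ∧
      ∀ s ∈ L, ∀ p ∈ A, ∃ q ∈ F, ∀ x, s * q.eval x = p.eval (E * x) := by
  classical
  have hq : ∀ (s : L) (p : A), ∃ q : R[X], q.eval 0 = 0 ∧
      ∀ x, s * q.eval x = p.1.eval ((∏ t ∈ L, t) * x) := by
    intro s p
    obtain ⟨e, he⟩ := Finset.dvd_prod_of_mem (fun t => t) s.2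
    simpa [← he] using exists_forall_mul_eval_eq (hA p p.2) s e
  choose q hq0 hq using hq
  refine ⟨∏ t ∈ L, t, Finset.prod_ne_zero_iff.2 fun s hs => ne_of_mem_of_not_mem hs hL,
    Finset.univ.image fun t : L × A => q t.1 t.2, ?_, fun s hs p hp => ?_⟩
  · simp only [Finset.mem_image, Finset.mem_univ, true_and, forall_exists_index]
    rintro _ t rfl
    exact hq0 t.1 t.2
  · exact ⟨_, Finset.mem_image_of_mem _ (Finset.mem_univ (⟨s, hs⟩, ⟨p, hp⟩)), hq ⟨s, hs⟩ ⟨p, hp⟩⟩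

theorem exists_disjoint_range_mul_add [IsDomain R] [Infinite R] [Finite ι] {A : Finset R[X]}
    (hA : ∀ p ∈ A, p.eval 0 = 0) {L : Finset R} (hL : 0 ∉ L) (β : Type u) [Finite β] :
    ∃ T : Finset R, ∀ y, ∃ W : Finset R, ∀ (Δ : R → ι → α) (k : β → α), HasMonochromatic Δ A W ∨
      ∃ x ∈ T, ∀ s ∈ L, Disjoint (Set.range (Δ (s * (y + x)))) (Set.range k) := by
  classical
  obtain ⟨E, hE, F, hF, hFA⟩ := exists_family_mul_eval_eq hA hL
  obtain ⟨T, hT⟩ := isPartitionRegular hF (Set (L × ι × β)) {0}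
  refine ⟨T, fun y => ⟨L * (T.image (y + ·)) ∪ T.image (E * ·), fun Δ k => ?_⟩⟩
  -- colour `x` by the coincidences to be avoided: a monochromatic colour that is not empty makes
  -- some coordinate of `Δ` constant
  obtain ⟨x, d, h⟩ := hT fun x => {t | Δ (t.1 * (y + x)) t.2.1 = k t.2.2}
  obtain hempty | ⟨⟨s, j, i⟩, hsj⟩ :=
    {t : L × ι × β | Δ (t.1 * (y + x)) t.2.1 = k t.2.2}.eq_empty_or_nonempty
  · refine .inr ⟨x, h.base_mem, fun s hs => Set.disjoint_range_iff.2 fun j i hji => ?_⟩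
    exact hempty.subset (show ((⟨s, hs⟩, j, i) : L × ι × β) ∈ _ from hji)
  · refine .inl ⟨j, s * (y + x), E * d, ?_⟩
    have hmono : IsMonoConfig (fun x => Δ (s * (y + x)) j) (Δ (s * (y + x)) j) F {0} T x d :=
      h.recolor fun z _ hz => ((Set.ext_iff.1 hz (s, j, i)).2 hsj).trans hsj.symm
    refine hmono.map (θ := fun x => s * (y + x)) (fun z hz => ?_) ?_ ?_ fun p hp => ?_
    · exact Finset.mem_union_left _ (Finset.mul_mem_mul s.2 (Finset.mem_image_of_mem _ hz))
    · exact Finset.mem_union_right _ (Finset.mem_image_of_mem _ h.diff_mem)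
    · simpa [hE] using h.diff_notMem
    · obtain ⟨q, hq, hqp⟩ := hFA s s.2 p hp
      exact ⟨q, hq, by rw [← hqp]; ring⟩

theorem exists_forall_add_notMem [Infinite R] (T : Finset R) {Z : Set R} (hZ : Z.Finite) :
    ∃ y, ∀ x ∈ T, y + x ∉ Z := by
  classical
  obtain ⟨y, hy⟩ := Infinite.exists_notMem_finset (hZ.toFinset - T)
  refine ⟨y, fun x hx h => hy (Finset.mem_sub.2 ⟨y + x, by simpa using h, x, hx, by ring⟩)⟩

/-- Whenever two distinct shifts `g, g' ∈ Γ` cannot be told apart by their effect on members `p`,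
`q` of `B`, the colouring `Δ` distinguishes `p(g)` from `q(g')`. -/
def IsSeparated (Δ : R → ι → α) (B : Finset R[X]) (Γ : Finset R) : Prop :=
  (Γ : Set R).Pairwise fun g g' => ∀ p ∈ B, ∀ q ∈ B, shift g p = shift g' q →
    Disjoint (Set.range (Δ (p.eval g))) (Set.range (Δ (q.eval g')))

/-- The shifts `g'` that some nonlinear member of `B` cannot tell apart from a shift in `G`. -/
def clashing (B : Finset R[X]) (G : Finset R) : Set R :=
  {g' | ∃ q ∈ B, 1 < q.natDegree ∧ ∃ p ∈ B, ∃ g ∈ G, shift g' q = shift g p}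

theorem finite_clashing [IsDomain R] [CharZero R] (B : Finset R[X]) (G : Finset R) :
    (clashing B G).Finite := by
  have hfin : (⋃ q ∈ {q ∈ B | 1 < q.natDegree}, ⋃ p ∈ B, ⋃ g ∈ G,
      {g' | shift g' q = shift g p}).Finite :=
    Set.Finite.biUnion (Finset.finite_toSet _) fun q hq =>
      Set.Finite.biUnion (Finset.finite_toSet _) fun p _ =>
        Set.Finite.biUnion (Finset.finite_toSet _) fun g _ =>
          finite_setOf_shift_eq (Finset.mem_filter.1 hq).2 _
  refine hfin.subset ?_
  rintro g' ⟨q, hq, hdeg, p, hp, g, hg, h⟩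
  simp only [Set.mem_iUnion]
  exact ⟨q, Finset.mem_filter.2 ⟨hq, hdeg⟩, p, hp, g, hg, h⟩

theorem IsSeparated.insert [DecidableEq R] {Δ : R → ι → α} {B : Finset R[X]} {Γ : Finset R} {g' : R}
    (hΓ : IsSeparated Δ B Γ) (hB : IsAdmissible B) (hg' : g' ∉ clashing B Γ)
    (hlin : ∀ g ∈ Γ, ∀ s ∈ leadingCoeffs B 1,
      Disjoint (Set.range (Δ (s * g'))) (Set.range (Δ (s * g)))) :
    IsSeparated Δ B (insert g' Γ) := by
  have hnew : ∀ g ∈ Γ, ∀ q ∈ B, ∀ p ∈ B, shift g' q = shift g p →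
      Disjoint (Set.range (Δ (q.eval g'))) (Set.range (Δ (p.eval g))) := by
    intro g hg q hq p hp h
    have hq1 : q.natDegree = 1 := by
      have := natDegree_pos_of_eval_zero (hB q hq).1 (hB q hq).2
      by_contra hne
      exact hg' ⟨q, hq, by omega, p, hp, g, hg, h⟩
    have hp1 : p.natDegree = 1 := by rw [← natDegree_shift g p, ← h, natDegree_shift, hq1]
    have hlead : p.leadingCoeff = q.leadingCoeff := by
      rw [← leadingCoeff_shift g (by omega), ← h, leadingCoeff_shift g' (by omega)]
    rw [eval_eq_leadingCoeff_mul hq1 (hB q hq).2, eval_eq_leadingCoeff_mul hp1 (hB p hp).2, hlead]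
    exact hlin g hg _ (mem_leadingCoeffs.2 ⟨q, hq, hq1, rfl⟩)
  rw [IsSeparated, Finset.coe_insert]
  exact Set.Pairwise.insert hΓ fun g hg _ =>
    ⟨hnew g hg, fun p hp q hq h => (hnew g hg q hq p hp h.symm).symm⟩

theorem exists_isSeparated [IsDomain R] [CharZero R] [Finite ι] {A B : Finset R[X]}
    (hA : ∀ p ∈ A, p.eval 0 = 0) (hB : IsAdmissible B) (t : ℕ) :
    ∃ G W : Finset R, ∀ Δ : R → ι → α, HasMonochromatic Δ A W ∨
      ∃ Γ ⊆ G, Γ.card = t ∧ IsSeparated Δ B Γ := by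
  classical
  induction t with
  | zero => exact ⟨∅, ∅, fun Δ => .inr ⟨∅, by simp, by simp, by simp [IsSeparated]⟩⟩
  | succ t ih =>
    obtain ⟨G, W, hGW⟩ := ih
    have hL : 0 ∉ leadingCoeffs B 1 := by
      rw [mem_leadingCoeffs]
      rintro ⟨p, hp, _, hp0⟩
      exact (hB p hp).1 (leadingCoeff_eq_zero.1 hp0)
    obtain ⟨T, hT⟩ := exists_disjoint_range_mul_add (ι := ι) (α := α) hA hL
      (leadingCoeffs B 1 × G × ι)
    obtain ⟨y, hy⟩ := exists_forall_add_notMem T ((finite_clashing B G).union G.finite_toSet)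
    obtain ⟨W', hW'⟩ := hT y
    refine ⟨G ∪ T.image (y + ·), W ∪ W', fun Δ => ?_⟩
    obtain h | ⟨Γ, hΓG, hΓt, hΓ⟩ := hGW Δ
    · exact .inl (h.mono Finset.subset_union_left)
    obtain h | ⟨x, hx, hdisj⟩ := hW' Δ fun t => Δ (t.1 * t.2.1) t.2.2
    · exact .inl (h.mono Finset.subset_union_right)
    have hyx := hy x hx
    rw [Set.mem_union, not_or] at hyx
    refine .inr ⟨insert (y + x) Γ, ?_, ?_, hΓ.insert hB (fun h => hyx.1 ?_) fun g hg s hs => ?_⟩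
    · exact Finset.insert_subset (Finset.mem_union_right _ (Finset.mem_image_of_mem _ hx))
        (hΓG.trans Finset.subset_union_left)
    · rw [Finset.card_insert_of_notMem fun h => hyx.2 (hΓG h), hΓt]
    · obtain ⟨q, hq, hdeg, p, hp, g, hg, h⟩ := h
      exact ⟨q, hq, hdeg, p, hp, g, hΓG hg, h⟩
    · refine (hdisj s hs).mono_right ?_
      rintro _ ⟨j, rfl⟩
      exact ⟨(⟨s, hs⟩, ⟨g, hΓG hg⟩, j), rfl⟩

end Separation

section Window

variable {R : Type u} [CommRing R] {α : Type v} {ι : Type u}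

/-- The colouring that records at `x` all coordinates of `Δ` on the translate `x + V`. -/
def window (Δ : R → ι → α) (V : Finset R) : R → V × ι → α :=
  fun x t => Δ (x + t.1) t.2

theorem range_subset_range_window (Δ : R → ι → α) {V : Finset R} {v : R} (hv : v ∈ V) (x : R) :
    Set.range (Δ (x + v)) ⊆ Set.range (window Δ V x) := by
  rintro _ ⟨j, rfl⟩
  exact ⟨(⟨v, hv⟩, j), rfl⟩

/-- The kernel of `f`, as a set of pairs: it takes only finitely many values even when the colours
themselves do not. -/
def pattern {ι α : Type*} (f : ι → α) : Set (ι × ι) :=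
  {t | f t.1 = f t.2}

theorem disjoint_range_of_pattern_window_eq {Δ : R → ι → α} {V : Finset R} {x y v w : R}
    (h : pattern (window Δ V x) = pattern (window Δ V y)) (hv : v ∈ V) (hw : w ∈ V)
    (hdisj : Disjoint (Set.range (Δ (y + v))) (Set.range (Δ (y + w)))) :
    Disjoint (Set.range (Δ (x + v))) (Set.range (Δ (x + w))) :=
  Set.disjoint_range_iff.2 fun i j hij => Set.disjoint_range_iff.1 hdisj i j <|
    (Set.ext_iff.1 h ((⟨v, hv⟩, i), (⟨w, hw⟩, j))).1 hij

variable {Δ : R → ι → α} {B : Finset R[X]} {p₁ : R[X]} {G Γ V : Finset R} {b d : R}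

theorem pairwiseDisjoint_range_of_window (hB : ∀ p ∈ B, p.eval 0 = 0)
    (hpat : ∀ q ∈ insert 0 (reduce B p₁ G : Set R[X]),
      pattern (window Δ V (b + q.eval d)) = pattern (window Δ V b))
    (hrain : (insert 0 (reduce B p₁ G : Set R[X])).PairwiseDisjoint fun q =>
      Set.range (window Δ V (b + q.eval d)))
    (hΓ : IsSeparated (fun x => Δ (b + x)) B Γ) (hΓG : Γ ⊆ G)
    (hV : ∀ p ∈ B, ∀ g ∈ Γ, p.eval g ∈ V) :
    (B ×ˢ Γ : Set (R[X] × R)).PairwiseDisjoint fun t =>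
      Set.range (Δ (b - p₁.eval d + t.1.eval (d + t.2))) := by
  rintro ⟨p, g⟩ ⟨hp, hg⟩ ⟨q, g'⟩ ⟨hq, hg'⟩ hne
  simp only [Function.onFun, sub_eval_add_eval_add]
  have hpg := shift_sub_mem_insert_reduce (p₁ := p₁) hp (hΓG hg)
  have hqg' := shift_sub_mem_insert_reduce (p₁ := p₁) hq (hΓG hg')
  by_cases hshift : shift g p = shift g' q
  · have hgg' : g ≠ g' := by
      rintro rfl
      exact hne (by rw [shift_injOn g (hB p hp) (hB q hq) hshift])
    rw [← hshift]
    exact disjoint_range_of_pattern_window_eq (hpat _ hpg) (hV p hp g hg) (hV q hq g' hg')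
      (hΓ hg hg' hgg' p hp q hq hshift)
  · exact (hrain hpg hqg' fun h => hshift (sub_left_injective h)).mono
      (range_subset_range_window Δ (hV p hp g hg) _)
      (range_subset_range_window Δ (hV q hq g' hg') _)

theorem exists_disjoint_range_of_card_lt {ι α γ : Type*} [Finite ι] {Γ : Finset γ} {K : γ → Set α}
    (hK : (Γ : Set γ).PairwiseDisjoint K) (v : ι → α) (hΓ : Nat.card ι < Γ.card) :
    ∃ g ∈ Γ, Disjoint (K g) (Set.range v) := by
  by_contra! hcon
  have hmeet : ∀ g : Γ, ∃ i, v i ∈ K g := by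
    intro g
    obtain ⟨_, hg, i, rfl⟩ := Set.not_disjoint_iff.1 (hcon g g.2)
    exact ⟨i, hg⟩
  choose i hi using hmeet
  have hinj : Function.Injective i := fun g g' h =>
    Subtype.ext (hK.elim_set g.2 g'.2 _ (hi g) (h ▸ hi g'))
  have := Nat.card_le_card_of_injective i hinj
  rw [Nat.card_eq_fintype_card, Fintype.card_coe] at this
  omega

theorem IsMonoConfig.hasRainbow_of_window [DecidableEq R] [Finite ι] {κ : Type*} [Subsingleton κ]
    {H S T : Finset R}
    (h : IsMonoConfig (fun x => pattern (window Δ V x)) (pattern (window Δ V b)) (reduce B p₁ G)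
      (H - G) T b d)
    (hrain : (insert 0 (reduce B p₁ G : Set R[X])).PairwiseDisjoint fun q =>
      Set.range (window Δ V (b + q.eval d)))
    (hB : ∀ p ∈ B, p.eval 0 = 0) (hΓ : IsSeparated (fun x => Δ (b + x)) B Γ) (hΓG : Γ ⊆ G)
    (hcard : Nat.card ι < Γ.card) (hV : ∀ p ∈ B, ∀ g ∈ Γ, p.eval g ∈ V)
    (hS : (T + V) ∪ (T + G) ∪ (T - T.image p₁.eval) ⊆ S) (c : R → κ) : HasRainbow Δ c B H S := by
  rw [Finset.union_subset_iff, Finset.union_subset_iff] at hS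
  have hdisj := pairwiseDisjoint_range_of_window hB (fun q hq => (h.eval_insert_zero hq).2) hrain
    hΓ hΓG hV
  have hdisjΓ : (Γ : Set R).PairwiseDisjoint fun g =>
      ⋃ p ∈ B, Set.range (Δ (b - p₁.eval d + p.eval (d + g))) := by
    intro g hg g' hg' hne
    simp only [Function.onFun, Set.disjoint_iUnion_left, Set.disjoint_iUnion_right]
    exact fun q hq p hp =>
      @hdisj (p, g) ⟨hp, hg⟩ (q, g') ⟨hq, hg'⟩ fun h => hne (congrArg Prod.snd h)
  obtain ⟨g, hg, hbase⟩ :=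
    exists_disjoint_range_of_card_lt hdisjΓ (Δ (b - p₁.eval d)) hcard
  simp only [Set.disjoint_iUnion_left] at hbase
  refine ⟨b - p₁.eval d, d + g, ⟨?_, ?_, ?_, fun p hp => ?_, fun _ _ => Subsingleton.elim _ _⟩,
    Set.pairwiseDisjoint_insert.2 ⟨fun p hp q hq hne => ?_, fun p hp _ => ?_⟩⟩
  · exact hS.2 (Finset.sub_mem_sub h.base_mem (Finset.mem_image_of_mem _ h.diff_mem))
  · exact hS.1.2 (Finset.add_mem_add h.diff_mem (hΓG hg))
  · exact fun hH => h.diff_notMem (Finset.mem_sub.2 ⟨d + g, hH, g, hΓG hg, by ring⟩)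
  · rw [sub_eval_add_eval_add]
    exact hS.1.1 (Finset.add_mem_add
      (h.eval_insert_zero (shift_sub_mem_insert_reduce hp (hΓG hg))).1 (hV p hp g hg))
  · exact @hdisj (p, g) ⟨hp, hg⟩ (q, g) ⟨hq, hg⟩ fun h => hne (congrArg Prod.fst h)
  · simpa using (hbase p hp).symm

theorem IsCanonical.of_reduce [IsDomain R] [CharZero R] (hB : IsAdmissible B)
    (hred : ∀ G : Finset R, G.Nonempty → ∀ (κ : Type u) [Finite κ],
      IsCanonical α κ (reduce B p₁ G)) :
    IsCanonical α PUnit B := by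
  classical
  intro ι _ A hA H
  obtain ⟨G, W, hGW⟩ := exists_isSeparated (ι := ι) (α := α) hA hB (Nat.card ι + 1)
  set V := Finset.image₂ (fun p g => p.eval g) B G ∪ W
  obtain ⟨T, hT⟩ := hred (insert 0 G) (Finset.insert_nonempty 0 G) (Set ((V × ι) × V × ι))
    (V × ι) A hA (H - insert 0 G)
  have hTV : T + V ⊆ T ∪ W ∪ ((T + V) ∪ (T + insert 0 G) ∪ (T - T.image p₁.eval)) :=
    (Finset.subset_union_left.trans Finset.subset_union_left).trans Finset.subset_union_right
  refine ⟨T ∪ W ∪ ((T + V) ∪ (T + insert 0 G) ∪ (T - T.image p₁.eval)), fun Δ c => ?_⟩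
  obtain ⟨⟨v, j⟩, a, d, h⟩ | ⟨b, d, h, hrain⟩ := hT (window Δ V) fun x => pattern (window Δ V x)
  · refine .inl ⟨j, a + v, d, h.map (θ := (· + v.1)) (fun x hx => ?_) ?_ h.diff_notMem
      fun p hp => ⟨p, hp, add_right_comm ..⟩⟩
    · exact hTV (Finset.add_mem_add hx v.2)
    · exact Finset.mem_union_left _ (Finset.mem_union_left _ h.diff_mem)
  obtain ⟨j, a, d, h'⟩ | ⟨Γ, hΓG, hcard, hΓ⟩ := hGW fun x => Δ (b + x)
  · refine .inl ⟨j, b + a, d, h'.translate (c := fun x => Δ x j) (fun x hx => ?_) ?_⟩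
    · exact hTV (Finset.add_mem_add h.base_mem (Finset.mem_union_right _ hx))
    · exact Finset.mem_union_left _ (Finset.mem_union_right _ h'.diff_mem)
  · refine .inr (h.hasRainbow_of_window hrain (fun p hp => (hB p hp).2) hΓ
      (hΓG.trans (Finset.subset_insert 0 G)) (by omega) (fun p hp g hg => ?_)
      Finset.subset_union_right c)
    exact Finset.mem_union_left _ (Finset.mem_image₂_of_mem hp (hΓG hg))

end Window

section Dilation

variable {R : Type u} [CommRing R]

/-- The polynomial `p(X x)` in the variable `x` over `R[X]`. Evaluating the coefficients at `l`
turns a configuration of it into a configuration of `p`. -/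
noncomputable def dilate (p : R[X]) : R[X][X] :=
  (p.map C).comp (C X * X)

theorem eval_eval_dilate (p v : R[X]) (l : R) :
    ((dilate p).eval v).eval l = p.eval (l * v.eval l) := by
  rw [dilate, eval_comp, eval_mul, eval_C, eval_X, eval_map, ← coe_evalRingHom, hom_eval₂]
  have hcomp : (evalRingHom l).comp (C : R →+* R[X]) = RingHom.id R := by
    ext
    simp
  simp [hcomp, eval₂_id]

/-- The substitution `u ↦ a + u(l) - u(0)` by which colourings of `R` are pulled back to `R[X]`. -/
def specialize (a l : R) (u : R[X]) : R :=
  a + (u.eval l - u.eval 0)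

theorem specialize_add_eval_dilate (a l : R) (u v : R[X]) {p : R[X]} (h0 : p.eval 0 = 0) :
    specialize a l (u + (dilate p).eval v) = specialize a l u + p.eval (l * v.eval l) := by
  simp only [specialize, eval_add, eval_eval_dilate, zero_mul, h0]
  ring

theorem dilate_zero : dilate (0 : R[X]) = 0 := by
  simp [dilate]

theorem eval_zero_dilate {p : R[X]} (h0 : p.eval 0 = 0) : (dilate p).eval 0 = 0 := by
  rw [dilate, eval_comp, eval_mul, eval_X, mul_zero, eval_map, ← C_0, eval₂_at_apply, h0]

variable [IsDomain R]

theorem natDegree_dilate (p : R[X]) : (dilate p).natDegree = p.natDegree := by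
  rw [dilate, natDegree_comp, natDegree_C_mul_X _ X_ne_zero,
    natDegree_map_eq_of_injective C_injective, mul_one]

theorem leadingCoeff_dilate (p : R[X]) :
    (dilate p).leadingCoeff = C p.leadingCoeff * X ^ p.natDegree := by
  rw [dilate, leadingCoeff_comp (by rw [natDegree_C_mul_X _ X_ne_zero]; exact one_ne_zero),
    leadingCoeff_map_of_injective C_injective, natDegree_map_eq_of_injective C_injective,
    leadingCoeff_C_mul_X]

theorem dilate_injective : Function.Injective (dilate (R := R)) := by
  intro p q h
  refine map_injective C C_injective (sub_eq_zero.1 ?_)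
  have hcomp : (p.map C - q.map C).comp (C X * X) = 0 := by
    rw [sub_comp, sub_eq_zero]
    exact h
  obtain h0 | ⟨_, hconst⟩ := comp_eq_zero_iff.1 hcomp
  · exact h0
  · have := congrArg natDegree hconst
    rw [natDegree_C_mul_X _ X_ne_zero, natDegree_C] at this
    exact absurd this one_ne_zero

theorem IsAdmissible.image_dilate [DecidableEq R[X][X]] {B : Finset R[X]}
    (hB : IsAdmissible B) : IsAdmissible (B.image dilate) := by
  intro q hq
  obtain ⟨p, hp, rfl⟩ := Finset.mem_image.1 hq
  exact ⟨fun h => (hB p hp).1 (dilate_injective (h.trans dilate_zero.symm)),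
    eval_zero_dilate (hB p hp).2⟩

theorem leadingCoeffs_image_dilate [DecidableEq R[X]] [DecidableEq R[X][X]] (B : Finset R[X])
    (D : ℕ) :
    leadingCoeffs (B.image dilate) D = (leadingCoeffs B D).image fun x => C x * X ^ D := by
  ext y
  simp only [mem_leadingCoeffs, Finset.mem_image]
  constructor
  · rintro ⟨_, ⟨p, hp, rfl⟩, hD, rfl⟩
    rw [natDegree_dilate] at hD
    exact ⟨_, ⟨p, hp, hD, rfl⟩, by rw [leadingCoeff_dilate, hD]⟩
  · rintro ⟨_, ⟨p, hp, rfl, rfl⟩, rfl⟩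
    exact ⟨_, ⟨p, hp, rfl⟩, natDegree_dilate p, leadingCoeff_dilate p⟩

theorem weight_image_dilate [DecidableEq R[X][X]] (B : Finset R[X]) :
    weight (B.image dilate) = weight B := by
  classical
  refine weight_eq_weight fun D => ?_
  rw [leadingCoeffs_image_dilate]
  exact Finset.card_image_of_injective _ fun x y h =>
    C_injective (mul_right_cancel₀ (pow_ne_zero D X_ne_zero) h)

theorem exists_finset_forall_mul_eval_notMem (V : Finset R[X]) (H : Finset R) :
    ∃ Z : Finset R, ∀ l ∉ Z, ∀ v ∈ V, v ≠ 0 → l * v.eval l ∉ H := by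
  classical
  refine ⟨V.biUnion fun v => H.biUnion fun h => (X * v - C h).roots.toFinset,
    fun l hl v hv hv0 hH => hl ?_⟩
  have hne : X * v - C (l * v.eval l) ≠ 0 := by
    intro h
    have := natDegree_X_mul hv0
    rw [sub_eq_zero.1 h, natDegree_C] at this
    omega
  refine Finset.mem_biUnion.2 ⟨v, hv, Finset.mem_biUnion.2 ⟨_, hH, ?_⟩⟩
  rw [Multiset.mem_toFinset, mem_roots hne]
  simp

theorem exists_specialize_eq [Infinite R] (S : Finset R[X]) (κ : Type u) [Finite κ]
    (H : Finset R) :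
    ∃ T : Finset R, ∀ c : R → κ, ∃ a l,
      (∀ u ∈ S, specialize a l u ∈ T ∧ c (specialize a l u) = c a) ∧
      ∀ v ∈ S, v ≠ 0 → l * v.eval l ∈ T ∧ l * v.eval l ∉ H := by
  classical
  obtain ⟨Z, hZ⟩ := exists_finset_forall_mul_eval_notMem S H
  obtain ⟨T, hT⟩ := isPartitionRegular (B := S.image fun u => u - C (u.eval 0)) (by simp) κ Z
  refine ⟨T ∪ Finset.image₂ (fun l v => l * v.eval l) T S, fun c => ?_⟩
  obtain ⟨a, l, h⟩ := hT c
  have heval (u : R[X]) : specialize a l u = a + (u - C (u.eval 0)).eval l := by simp [specialize]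
  refine ⟨a, l, fun u hu => ?_, fun v hv hv0 => ⟨?_, hZ l h.diff_notMem v hv hv0⟩⟩
  · have hmem := Finset.mem_image_of_mem (fun u => u - C (u.eval 0)) hu
    rw [heval]
    exact ⟨Finset.mem_union_left _ (h.eval_mem _ hmem), h.color_eq _ hmem⟩
  · exact Finset.mem_union_right _ (Finset.mem_image₂_of_mem h.diff_mem hv)

theorem IsCanonical.of_dilate [Infinite R] [DecidableEq R[X][X]] {α : Type v} {κ : Type u}
    [Finite κ] {B : Finset R[X]} (hB : ∀ p ∈ B, p.eval 0 = 0)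
    (hdil : IsCanonical α PUnit (B.image dilate)) : IsCanonical α κ B := by
  classical
  intro ι _ A hA H
  obtain ⟨S, hS⟩ := hdil ι (A.image dilate)
    (by simpa using fun p hp => eval_zero_dilate (hA p hp)) {0}
  obtain ⟨T, hT⟩ := exists_specialize_eq S κ (insert 0 H)
  refine ⟨T, fun Δ c => ?_⟩
  obtain ⟨a, l, hu, hv⟩ := hT c
  simp only [Finset.mem_insert, not_or] at hv
  obtain ⟨j, u, v, h⟩ | ⟨u, v, h, hrain⟩ := hS (fun u => Δ (specialize a l u)) fun _ => PUnit.unit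
  · have hlv := hv v h.diff_mem (by simpa using h.diff_notMem)
    exact .inl ⟨j, _, _, h.map (c := fun x => Δ x j) (fun u hu' => (hu u hu').1) hlv.1
      (by simpa using hlv.2.1) fun p hp =>
        ⟨_, Finset.mem_image_of_mem _ hp, specialize_add_eval_dilate a l u v (hA p hp)⟩⟩
  · have hlv := hv v h.diff_mem (by simpa using h.diff_notMem)
    have hmono : IsMonoConfig (fun w => c (specialize a l w)) (c (specialize a l u))
        (B.image dilate) {0} S u v :=
      h.recolor fun w hw _ => (hu w hw).2.trans (hu u h.base_mem).2.symm
    refine .inr ⟨_, _, hmono.map (fun u hu' => (hu u hu').1) hlv.1 hlv.2.2 fun p hp =>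
      ⟨_, Finset.mem_image_of_mem _ hp, specialize_add_eval_dilate a l u v (hB p hp)⟩, ?_⟩
    have hmem : ∀ p ∈ insert 0 (B : Set R[X]), p.eval 0 = 0 ∧
        dilate p ∈ insert 0 (B.image dilate : Set R[X][X]) := by
      rintro p (rfl | hp)
      · simp [dilate_zero]
      · exact ⟨hB p hp, .inr (Finset.mem_image_of_mem _ hp)⟩
    intro p hp q hq hpq
    have := hrain (hmem p hp).2 (hmem q hq).2 (dilate_injective.ne hpq)
    simpa only [Function.onFun, specialize_add_eval_dilate a l u v (hmem p hp).1,
      specialize_add_eval_dilate a l u v (hmem q hq).1] using this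

end Dilation

theorem IsAdmissible.isCanonical {R : Type u} [CommRing R] [IsDomain R] [CharZero R]
    {B : Finset R[X]} (hB : IsAdmissible B) (α : Type v) (κ : Type u) [Finite κ] :
    IsCanonical α κ B := by
  classical
  induction hw : weight B using WellFoundedLT.induction generalizing R κ with
  | _ w ih =>
    refine .of_dilate (fun p hp => (hB p hp).2) ?_
    have hdil := hB.image_dilate
    obtain hempty | hne := (B.image dilate).eq_empty_or_nonempty
    · rw [hempty]
      exact isCanonical_empty α PUnit
    obtain ⟨p₁, hp₁, hmin⟩ := Finset.exists_min_image _ natDegree hne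
    refine .of_reduce hdil fun G hG κ _ =>
      ih _ ?_ (isAdmissible_reduce (hdil p₁ hp₁).2) κ rfl
    rw [← hw, ← weight_image_dilate B]
    exact weight_reduce_lt hdil hp₁ hmin hG

section Integers

theorem exists_finset_forall_injOn_eval {R : Type*} [CommRing R] [IsDomain R] (B : Finset R[X]) :
    ∃ Z : Finset R, ∀ d ∉ Z, Set.InjOn (eval d) (B : Set R[X]) := by
  classical
  refine ⟨B.biUnion fun p => B.biUnion fun q => (p - q).roots.toFinset,
    fun d hd p hp q hq h => ?_⟩
  by_contra hne
  refine hd (Finset.mem_biUnion.2 ⟨p, hp, Finset.mem_biUnion.2 ⟨q, hq, ?_⟩⟩)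
  rw [Multiset.mem_toFinset, mem_roots (sub_ne_zero.2 hne)]
  simpa [sub_eq_zero] using h

theorem exists_forall_add_mem_Icc (S : Finset ℤ) :
    ∃ (t : ℤ) (N : ℕ), ∀ x ∈ S, t + x ∈ Set.Icc 1 (N : ℤ) := by
  obtain ⟨l, hl⟩ := S.bddBelow
  obtain ⟨u, hu⟩ := S.bddAbove
  refine ⟨1 - l, (u - l + 1).toNat, fun x hx => ⟨?_, ?_⟩⟩
  · linarith [hl hx]
  · linarith [hu hx, Int.self_le_toNat (u - l + 1)]

theorem lt_sq_of_notMem_Icc {h : ℕ} {d : ℤ} (hd : d ∉ Finset.Icc (-(h : ℤ)) h) :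
    (h : ℤ) < d ^ 2 := by
  rw [Finset.mem_Icc, ← abs_le, not_le, ← Int.natCast_natAbs] at hd
  exact hd.trans_le (Int.natAbs_le_self_sq d)

theorem IsAdmissible.image_expand {R : Type*} [CommSemiring R] [DecidableEq R[X]] {B : Finset R[X]}
    (hB : IsAdmissible B) {r : ℕ} (hr : 0 < r) : IsAdmissible (B.image (expand R r)) := by
  intro q hq
  obtain ⟨p, hp, rfl⟩ := Finset.mem_image.1 hq
  exact ⟨(expand_ne_zero hr).2 (hB p hp).1, by rw [expand_eval, zero_pow hr.ne', (hB p hp).2]⟩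

theorem IsAdmissible.exists_hasMonochromatic_or_rainbow_gt {A B : Finset ℤ[X]}
    (hB : IsAdmissible B) (hA : ∀ p ∈ A, p.eval 0 = 0) (h : ℕ) (α : Type v) (ι κ : Type)
    [Finite ι] [Finite κ] :
    ∃ S : Finset ℤ, ∀ (Δ : ℤ → ι → α) (c : ℤ → κ), HasMonochromatic Δ A S ∨
      ∃ a d, (h : ℤ) < d ∧ Set.InjOn (eval d) (insert 0 (B : Set ℤ[X])) ∧
        (∀ p ∈ insert 0 (B : Set ℤ[X]), a + p.eval d ∈ S ∧ c (a + p.eval d) = c a) ∧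
        (insert 0 (B : Set ℤ[X])).PairwiseDisjoint fun p => Set.range (Δ (a + p.eval d)) := by
  classical
  -- a configuration of the polynomials `p(x ^ 2)` with difference `d` is one of the `p` with
  -- difference `d ^ 2`, which is large and positive whatever the sign of `d`
  have hmem : ∀ p ∈ insert 0 (B : Set ℤ[X]),
      expand ℤ 2 p ∈ insert 0 (B.image (expand ℤ 2) : Set ℤ[X]) := by
    rintro p (rfl | hp)
    · simp
    · exact .inr (Finset.mem_image_of_mem _ hp)
  obtain ⟨Z, hZ⟩ := exists_finset_forall_injOn_eval (insert 0 (B.image (expand ℤ 2)))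
  rw [Finset.coe_insert] at hZ
  obtain ⟨S, hS⟩ := (hB.image_expand two_pos).isCanonical α κ ι A hA (Finset.Icc (-(h : ℤ)) h ∪ Z)
  refine ⟨S, fun Δ c => (hS Δ c).imp_right ?_⟩
  rintro ⟨a, d, hmono, hrain⟩
  have hd := hmono.diff_notMem
  rw [Finset.mem_union, not_or] at hd
  refine ⟨a, d ^ 2, lt_sq_of_notMem_Icc hd.1, fun p hp q hq hpq => ?_, fun p hp => ?_,
    fun p hp q hq hpq => ?_⟩
  · refine expand_injective two_pos (hZ d hd.2 (hmem p hp) (hmem q hq) ?_)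
    rwa [expand_eval, expand_eval]
  · simpa only [expand_eval] using hmono.eval_insert_zero (hmem p hp)
  · simpa only [expand_eval, Function.onFun] using
      hrain (hmem p hp) (hmem q hq) ((expand_injective two_pos).ne hpq)

end Integers

end CanonicalPolynomialVdW

/-- **Theorem 4.2 (strengthened canonical polynomial Van der Waerden).**
Let `h, k, k', m, n ∈ ℕ`, let `𝒜 = {p 1, ..., p k}` be a set of integral
polynomials and `ℬ = {p' 1, ..., p' k'}` a set of pairwise distinct nonzero
integral polynomials.  Then there exists `N` such that for every
`(m, n)`-type colouring `Δ` of `{1, ..., N}` one of the following holds: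
(i) there exist `a ∈ ℤ` and `d ≠ 0` with
`{a, a + p 1 d, ..., a + p k d} ⊆ {1, ..., N}` monochromatic, i.e. some
coordinate `j ∈ {1, ..., m}` of `Δ` is constant on the set; or
(ii) there exist `a' ∈ ℤ` and `d' > h` with
`{a', a' + p' 1 d', ..., a' + p' k' d'} ⊆ {1, ..., N}` fully-rainbow, i.e. its
elements are pairwise distinct, for any two distinct elements `x, y` and
coordinates `j, j' ≤ m` one has `Δ_j x ≠ Δ_{j'} y`, and the last coordinate
`Δ_{m+1}` is constant on the set. -/
theorem strengthened_canonical_polynomial_vdw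
    (h : ℕ) {k k' : ℕ} (m n : ℕ)
    (p : Fin k → Polynomial ℤ) (hp0 : ∀ i, (p i).eval 0 = 0)
    (p' : Fin k' → Polynomial ℤ) (hp'0 : ∀ i, (p' i).eval 0 = 0)
    (hp'ne : ∀ i, p' i ≠ 0) (hp'dist : ∀ i j, i ≠ j → p' i ≠ p' j) :
    ∃ N : ℕ, ∀ Δ : ℤ → (Fin m → ℕ) × Fin n,
      (∃ a d : ℤ, d ≠ 0 ∧
        a ∈ Set.Icc (1 : ℤ) (N : ℤ) ∧
        (∀ i : Fin k, a + (p i).eval d ∈ Set.Icc (1 : ℤ) (N : ℤ)) ∧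
        (∃ j : Fin m, ∀ i : Fin k, (Δ (a + (p i).eval d)).1 j = (Δ a).1 j)) ∨
      (∃ a' d' : ℤ, (h : ℤ) < d' ∧
        a' ∈ Set.Icc (1 : ℤ) (N : ℤ) ∧
        (∀ i : Fin k', a' + (p' i).eval d' ∈ Set.Icc (1 : ℤ) (N : ℤ)) ∧
        (Function.Injective fun i : Fin k' => a' + (p' i).eval d') ∧
        (∀ i : Fin k', a' + (p' i).eval d' ≠ a') ∧
        (∀ i i' : Fin k', i ≠ i' → ∀ j j' : Fin m,
          (Δ (a' + (p' i).eval d')).1 j ≠ (Δ (a' + (p' i').eval d')).1 j') ∧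
        (∀ i : Fin k', ∀ j j' : Fin m,
          (Δ (a' + (p' i).eval d')).1 j ≠ (Δ a').1 j') ∧
        (∀ i : Fin k', (Δ (a' + (p' i).eval d')).2 = (Δ a').2)) := by
  classical
  have hA : ∀ q ∈ Finset.univ.image p, q.eval 0 = 0 := by simpa using hp0
  have hB : CanonicalPolynomialVdW.IsAdmissible (Finset.univ.image p') := by
    simpa [CanonicalPolynomialVdW.IsAdmissible] using fun i => ⟨hp'ne i, hp'0 i⟩
  obtain ⟨S, hS⟩ := hB.exists_hasMonochromatic_or_rainbow_gt hA h ℕ (Fin m) (Fin n)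
  obtain ⟨t, N, hN⟩ := CanonicalPolynomialVdW.exists_forall_add_mem_Icc S
  refine ⟨N, fun Δ => ?_⟩
  obtain ⟨j, a, d, hmono⟩ | ⟨a, d, hd, hinj, hpt, hdisj⟩ :=
    hS (fun x => (Δ (t + x)).1) fun x => (Δ (t + x)).2
  · refine .inl ⟨t + a, d, by simpa using hmono.diff_notMem, hN a hmono.base_mem, ?_⟩
    have hpA (i) := Finset.mem_image_of_mem p (Finset.mem_univ i)
    simp only [add_assoc]
    exact ⟨fun i => hN _ (hmono.eval_mem _ (hpA i)), j, fun i => hmono.color_eq _ (hpA i)⟩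
  · have h0 := Set.mem_insert 0 (SetLike.coe (Finset.univ.image p'))
    have hmem (i) := Set.mem_insert_of_mem 0 <|
      Finset.mem_coe.2 (Finset.mem_image_of_mem p' (Finset.mem_univ i))
    refine .inr ⟨t + a, d, hd, hN a (by simpa using (hpt 0 h0).1), ?_⟩
    simp only [add_assoc]
    refine ⟨fun i => hN _ (hpt _ (hmem i)).1, fun i i' hii => ?_, fun i hi => ?_,
      fun i i' hii => Set.disjoint_range_iff.1 (hdisj (hmem i) (hmem i') (hp'dist i i' hii)),
      fun i => ?_, fun i => (hpt _ (hmem i)).2⟩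
    · by_contra hne
      exact hp'dist i i' hne (hinj (hmem i) (hmem i') (by simpa using hii))
    · exact hp'ne i (hinj (hmem i) h0 (by simpa using hi))
    · simpa using Set.disjoint_range_iff.1 (hdisj (hmem i) h0 (hp'ne i))
end

section
/- Let p_1, ..., p_k be pairwise distinct nonzero integral polynomials. Then there exists N ∈ ℕ such that for every colouring χ: {1,...,N} → ℕ there exist a ∈ ℤ and d ≠ 0 with {a, a+p_1(d), ..., a+p_k(d)} ⊆ {1,...,N} such that either χ takes the same value on all of a, a+p_1(d), ..., a+p_k(d), or these integers are pairwise distinct and χ takes pairwise distinct values on them. -/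
/-!
Colour `ℤ × ℤ` by the coincidence pattern of `(a, d)`, the set of pairs `(i, j)` for which
`a + p i d` and `a + p j d` have the same colour (with `0` added to the family). There are finitely
many patterns, so colour focusing with PET induction, run in the group of skew shifts
`(a, d) ↦ (a + u(d), d + s)`, finds `(a, d)` and a parameter `e ≠ 0` such that prescribed polynomial
families of skew shifts, evaluated at `e`, do not change the pattern. If it is trivial,
the configuration at `(a, d)` is rainbow. If `i ≠ j` coincide, compare with the skew shift at which
the `j`-th point is unchanged: `a + p i d` has the colour of its translate by a difference of
`p i - p j`. Such periods form a group under suitable translations, so repeated differencing leaves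
those that do not depend on `d`, namely the multiples of `c * e ^ (n + 1)`, where `n + 1` is the
degree of `p i - p j` and `c` is a nonzero constant. As `p l` vanishes at `0`, its value at
`c * e ^ (n + 1)` is such a multiple, so the configuration with base `a + p i d` and difference
`c * e ^ (n + 1)` is monochromatic.
-/

open scoped Pointwise

section ColourFocusing

variable {A G X κ : Type*} [Group G]

/-- `y` is a focus of the set `C` of colours: every `c ∈ C` is the common colour of the points
`f e * y`, `f ∈ F`, for some `e ∈ H`. -/
def IsFocus (F : Set (A → G)) (H : Set A) (φ : G → κ) (y : G) (C : Finset κ) : Prop :=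
  ∀ c ∈ C, ∃ e ∈ H, ∀ f ∈ F, φ (f e * y) = c

theorem IsFocus.mono {F : Set (A → G)} {H H' : Set A} {φ : G → κ} {y : G} {C : Finset κ}
    (hC : IsFocus F H φ y C) (hHH' : H ⊆ H') : IsFocus F H' φ y C := fun c hc =>
  let ⟨e, he, hcol⟩ := hC c hc
  ⟨e, hHH' he, hcol⟩

variable [AddMonoid A]

/-- The van der Waerden property of a family `F` of sequences in a group, in finitary form: the
base point `y` and the parameter `e` of a monochromatic `{y} ∪ {f e * y | f ∈ F}` can be found in
finite sets that depend only on the number of colours. The parameters are taken in `S`, which is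
how the parameter `0` is avoided. -/
def IsVdW (S : AddSubsemigroup A) (F : Set (A → G)) : Prop :=
  ∀ n : ℕ, ∃ B : Set G, B.Finite ∧ ∃ H : Set A, H.Finite ∧ H ⊆ S ∧
    ∀ φ : G → Fin n, ∃ y ∈ B, ∃ e ∈ H, ∀ f ∈ F, φ (f e * y) = φ y

/-- The sequence to which colour focusing reduces `f` when `f₁` is the sequence used to move the
base point. -/
def vdwReduction (f f₁ : A → G) (y : G) (h : A) : A → G :=
  fun e => y⁻¹ * (f h)⁻¹ * f (h + e) * (f₁ e)⁻¹ * y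

variable {S : AddSubsemigroup A} {F F' : Set (A → G)} {f₁ : A → G}

theorem isVdW_empty (hS : (S : Set A).Nonempty) : IsVdW S (∅ : Set (A → G)) := by
  obtain ⟨e, he⟩ := hS
  exact fun n => ⟨{1}, Set.finite_singleton _, {e}, Set.finite_singleton _,
    Set.singleton_subset_iff.2 he, by simp⟩

theorem IsVdW.of_subset_insert_one (hF : IsVdW S F) (hsub : F' ⊆ insert 1 F) : IsVdW S F' := by
  intro n
  obtain ⟨B, hB, H, hH, hHS, hret⟩ := hF n
  refine ⟨B, hB, H, hH, hHS, fun φ => ?_⟩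
  obtain ⟨y, hy, e, he, hcol⟩ := hret φ
  refine ⟨y, hy, e, he, fun f hf => ?_⟩
  rcases hsub hf with rfl | hf
  · rw [Pi.one_apply, one_mul]
  · exact hcol f hf

theorem IsVdW.exists_smul [MulAction G X] [Finite κ] (hF : IsVdW S F) (x₀ : X) :
    ∃ B : Set X, B.Finite ∧ ∃ H : Set A, H.Finite ∧ H ⊆ S ∧
      ∀ φ : X → κ, ∃ x ∈ B, ∃ e ∈ H, ∀ f ∈ F, φ (f e • x) = φ x := by
  obtain ⟨B, hB, H, hH, hHS, hret⟩ := hF (Nat.card κ)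
  refine ⟨(· • x₀) '' B, hB.image _, H, hH, hHS, fun φ => ?_⟩
  obtain ⟨y, hy, e, he, hcol⟩ := hret fun g => Finite.equivFin κ (φ (g • x₀))
  refine ⟨y • x₀, Set.mem_image_of_mem _ hy, e, he, fun f hf => ?_⟩
  rw [smul_smul]
  exact (Finite.equivFin κ).injective (hcol f hf)

theorem mul_vdwReduction_mul (f f₁ : A → G) (y x : G) (h e : A) :
    f h * y * (vdwReduction f f₁ y h e * x) = f (h + e) * ((f₁ e)⁻¹ * y * x) := by
  simp only [vdwReduction, mul_assoc, mul_inv_cancel_left]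

/-- Colouring `x` by all the colours `φ (f h * y * x)` at once turns a return of the reduced
sequences into the simultaneous coincidences below. -/
theorem exists_forall_color_eq [Finite κ] {B : Set G} {H : Set A} (hF : F.Finite) (hB : B.Finite)
    (hH : H.Finite)
    (hred : IsVdW S {g | ∃ f ∈ F, ∃ y ∈ B, ∃ h ∈ H, g = vdwReduction f f₁ y h}) :
    ∃ B' : Set G, B'.Finite ∧ ∃ H' : Set A, H'.Finite ∧ H' ⊆ S ∧
      ∀ φ : G → κ, ∃ x ∈ B', ∃ e ∈ H', ∀ f ∈ F, ∀ y ∈ B, ∀ h ∈ H,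
        φ (f (h + e) * ((f₁ e)⁻¹ * y * x)) = φ (f h * y * x) := by
  have := hF.to_subtype
  have := hB.to_subtype
  have := hH.to_subtype
  obtain ⟨B', hB', H', hH', hHS', hret⟩ := hred.exists_smul (κ := F × B × H → κ) (1 : G)
  refine ⟨B', hB', H', hH', hHS', fun φ => ?_⟩
  obtain ⟨x, hx, e, he, hcol⟩ := hret fun x t => φ (t.1.1 t.2.2 * t.2.1 * x)
  refine ⟨x, hx, e, he, fun f hf y hy h hh => ?_⟩
  have hcoord := congrFun (hcol _ ⟨f, hf, y, hy, h, hh, rfl⟩) (⟨f, hf⟩, ⟨y, hy⟩, ⟨h, hh⟩)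
  simpa only [smul_eq_mul, mul_vdwReduction_mul] using hcoord

theorem IsFocus.insert [DecidableEq κ] {H : Set A} {φ : G → κ} {x y z : G} {C : Finset κ} {e : A}
    (h_one : ∀ f ∈ F, f 0 = 1) (hC : IsFocus F H (fun g => φ (g * x)) y C)
    (hz : ∀ f ∈ F, ∀ h ∈ insert 0 H, φ (f (h + e) * z) = φ (f h * y * x)) :
    IsFocus F (insert e (H + {e})) φ z (insert (φ (y * x)) C) := by
  intro c hc
  rcases Finset.mem_insert.1 hc with rfl | hc
  · refine ⟨e, Set.mem_insert _ _, fun f hf => ?_⟩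
    simpa only [zero_add, h_one f hf, one_mul] using hz f hf 0 (Set.mem_insert _ _)
  · obtain ⟨h, hh, hcol⟩ := hC c hc
    exact ⟨h + e, Set.mem_insert_of_mem _ (Set.add_mem_add hh rfl), fun f hf =>
      (hz f hf h (Set.mem_insert_of_mem _ hh)).trans (hcol f hf)⟩

theorem exists_return_or_isFocus (hF : F.Finite) (h_one : ∀ f ∈ F, f 0 = 1)
    (hred : ∀ B : Set G, B.Finite → ∀ H : Set A, H.Finite →
      IsVdW S {g | ∃ f ∈ F, ∃ y ∈ B, ∃ h ∈ H, g = vdwReduction f f₁ y h})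
    (κ : Type*) [Finite κ] (s : ℕ) :
    ∃ B : Set G, B.Finite ∧ ∃ H : Set A, H.Finite ∧ H ⊆ S ∧ ∀ φ : G → κ,
      (∃ y ∈ B, ∃ e ∈ H, ∀ f ∈ F, φ (f e * y) = φ y) ∨
        ∃ y ∈ B, ∃ C : Finset κ, C.card = s ∧ IsFocus F H φ y C := by
  classical
  induction s with
  | zero =>
    exact ⟨{1}, Set.finite_singleton _, ∅, Set.finite_empty, Set.empty_subset _,
      fun φ => Or.inr ⟨1, rfl, ∅, rfl, by simp [IsFocus]⟩⟩
  | succ s ih =>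
    obtain ⟨B, hB, H, hH, hHS, hfocus⟩ := ih
    have hH₀ : (insert 0 H).Finite := hH.insert 0
    obtain ⟨B', hB', H', hH', hHS', hret⟩ :=
      exists_forall_color_eq (κ := κ) hF hB hH₀ (hred B hB _ hH₀)
    refine ⟨B * B' ∪ Set.image2 (fun e g => (f₁ e)⁻¹ * g) H' (B * B'),
      (hB.mul hB').union (hH'.image2 _ (hB.mul hB')), H ∪ (H' ∪ (H + H')),
      hH.union (hH'.union (hH.add hH')), ?_, fun φ => ?_⟩
    · refine Set.union_subset hHS (Set.union_subset hHS' ?_)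
      exact Set.add_subset_iff.2 fun h hh e he => S.add_mem (hHS hh) (hHS' he)
    obtain ⟨x, hx, e, he, hcol⟩ := hret φ
    rcases hfocus fun g => φ (g * x) with ⟨y, hy, h, hh, hyh⟩ | ⟨y, hy, C, hC, hyC⟩
    · exact Or.inl ⟨y * x, Or.inl (Set.mul_mem_mul hy hx), h, Or.inl hh, fun f hf => by
        simpa only [mul_assoc] using hyh f hf⟩
    by_cases hmem : φ (y * x) ∈ C
    · obtain ⟨h, hh, hyh⟩ := hyC _ hmem
      exact Or.inl ⟨y * x, Or.inl (Set.mul_mem_mul hy hx), h, Or.inl hh, fun f hf => by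
        simpa only [mul_assoc] using hyh f hf⟩
    · refine Or.inr ⟨(f₁ e)⁻¹ * y * x, Or.inr ?_, insert (φ (y * x)) C, ?_, ?_⟩
      · exact ⟨e, he, y * x, Set.mul_mem_mul hy hx, (mul_assoc _ _ _).symm⟩
      · rw [Finset.card_insert_of_notMem hmem, hC]
      · refine (hyC.insert h_one fun f hf h hh => hcol f hf y hy h hh).mono ?_
        refine Set.insert_subset (Or.inr (Or.inl he)) (Set.add_subset_iff.2 ?_)
        rintro h hh _ rfl
        exact Or.inr (Or.inr (Set.add_mem_add hh he))

/-- More colours cannot be focused at a point than there are, so colour focusing ends in a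
return. -/
theorem IsVdW.of_vdwReduction (hF : F.Finite) (h_one : ∀ f ∈ F, f 0 = 1)
    (hred : ∀ B : Set G, B.Finite → ∀ H : Set A, H.Finite →
      IsVdW S {g | ∃ f ∈ F, ∃ y ∈ B, ∃ h ∈ H, g = vdwReduction f f₁ y h}) : IsVdW S F := by
  intro n
  obtain ⟨B, hB, H, hH, hHS, hfocus⟩ := exists_return_or_isFocus hF h_one hred (Fin n) (n + 1)
  refine ⟨B, hB, H, hH, hHS, fun φ => (hfocus φ).resolve_right ?_⟩
  rintro ⟨y, -, C, hC, -⟩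
  have hle := card_finset_fin_le C
  omega

end ColourFocusing

/-- The part of `s'` above `w a₀` is matched with a part of `s` that avoids `a₀`, and `a₀`
dominates the rest of `s'`. -/
theorem isDershowitzMannaLT_map {α Λ : Type*} [LinearOrder Λ] {s s' : Finset α} {w : α → Λ}
    {a₀ : α} {ψ : α → α} (ha₀ : a₀ ∈ s) (hψ : Function.Injective ψ)
    (hs' : ∀ a ∈ s', w a₀ ≤ w a → ψ a ∈ s ∧ ψ a ≠ a₀ ∧ w (ψ a) = w a) :
    Multiset.IsDershowitzMannaLT (s'.val.map w) (s.val.map w) := by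
  classical
  set high := s'.filter fun a => w a₀ ≤ w a with hhigh
  have hmatch : ∀ a ∈ high, ψ a ∈ s ∧ ψ a ≠ a₀ ∧ w (ψ a) = w a := fun a ha =>
    hs' a (Finset.mem_filter.1 ha).1 (Finset.mem_filter.1 ha).2
  have hsub : high.map ⟨ψ, hψ⟩ ⊆ s := fun b hb => by
    obtain ⟨a, ha, rfl⟩ := Finset.mem_map.1 hb
    exact (hmatch a ha).1
  have ha₀_notMem : a₀ ∉ high.map ⟨ψ, hψ⟩ := fun h => by
    obtain ⟨a, ha, haa₀⟩ := Finset.mem_map.1 h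
    exact (hmatch a ha).2.1 haa₀
  have ha₀_mem : w a₀ ∈ (s \ high.map ⟨ψ, hψ⟩).val.map w :=
    Multiset.mem_map_of_mem w (Finset.mem_sdiff.2 ⟨ha₀, ha₀_notMem⟩)
  have hval : (high.map ⟨ψ, hψ⟩).val.map w = high.val.map w := by
    rw [Finset.map_val, Multiset.map_map]
    exact Multiset.map_congr rfl fun a ha => (hmatch a ha).2.2
  refine ⟨high.val.map w, (s'.filter fun a => ¬w a₀ ≤ w a).val.map w,
    (s \ high.map ⟨ψ, hψ⟩).val.map w, ?_, ?_, ?_, ?_⟩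
  · exact fun h => Multiset.notMem_zero _ (h ▸ ha₀_mem)
  · rw [← Multiset.map_add, hhigh, Finset.filter_val, Finset.filter_val, Multiset.filter_add_not]
  · rw [← hval, ← Multiset.map_add, Finset.sdiff_val,
      add_tsub_cancel_of_le (Finset.val_le_iff.2 hsub)]
  · intro b hb
    obtain ⟨a, ha, rfl⟩ := Multiset.mem_map.1 hb
    exact ⟨w a₀, ha₀_mem, not_le.1 (Finset.mem_filter.1 ha).2⟩

section Polynomial

open Polynomial

theorem coeff_taylor_eq_of_coeff_eq_zero {R : Type*} [Semiring R] {p : R[X]} {n : ℕ} (r : R)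
    (hp : ∀ m, n < m → p.coeff m = 0) : (taylor r p).coeff n = p.coeff n := by
  rcases (natDegree_le_iff_coeff_eq_zero.2 hp).lt_or_eq with hlt | rfl
  · rw [coeff_eq_zero_of_natDegree_lt hlt,
      coeff_eq_zero_of_natDegree_lt (by rwa [natDegree_taylor])]
  · rw [coeff_taylor_natDegree, leadingCoeff]

theorem coeff_taylor_sub_C_eval {R : Type*} [Ring R] {p : R[X]} {n : ℕ} (r : R)
    (hp₀ : p.coeff 0 = 0) (hp : ∀ m, n < m → p.coeff m = 0) :
    (taylor r p - C (p.eval r)).coeff n = p.coeff n := by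
  rcases eq_or_ne n 0 with rfl | hn
  · rw [coeff_sub, taylor_coeff_zero, coeff_C_zero, sub_self, hp₀]
  · rw [coeff_sub, coeff_C_of_ne_zero hn, sub_zero, coeff_taylor_eq_of_coeff_eq_zero r hp]

theorem evalRingHom_comp_C {R : Type*} [CommSemiring R] (e : R) :
    (evalRingHom e).comp C = RingHom.id R :=
  RingHom.ext fun _ => eval_C

/-- The skew shift `(a, d) ↦ (a + poly(d), d + shift)` of `R × R`. -/
@[ext]
structure SkewShift (R : Type*) [CommRing R] where
  /-- The polynomial added to the first coordinate. -/
  poly : R[X]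
  /-- The constant added to the second coordinate. -/
  shift : R

namespace SkewShift

variable {R S : Type*} [CommRing R] [CommRing S]

noncomputable instance : Mul (SkewShift R) :=
  ⟨fun g g' => ⟨g'.poly + taylor g'.shift g.poly, g.shift + g'.shift⟩⟩

noncomputable instance : One (SkewShift R) := ⟨⟨0, 0⟩⟩

noncomputable instance : Inv (SkewShift R) := ⟨fun g => ⟨-taylor (-g.shift) g.poly, -g.shift⟩⟩

@[simp] theorem poly_mul (g g' : SkewShift R) :
    (g * g').poly = g'.poly + taylor g'.shift g.poly := rfl

@[simp] theorem shift_mul (g g' : SkewShift R) : (g * g').shift = g.shift + g'.shift := rfl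

@[simp] theorem poly_one : (1 : SkewShift R).poly = 0 := rfl

@[simp] theorem shift_one : (1 : SkewShift R).shift = 0 := rfl

@[simp] theorem poly_inv (g : SkewShift R) : g⁻¹.poly = -taylor (-g.shift) g.poly := rfl

@[simp] theorem shift_inv (g : SkewShift R) : g⁻¹.shift = -g.shift := rfl

noncomputable instance : Group (SkewShift R) :=
  Group.ofLeftAxioms
    (fun a b c => SkewShift.ext
      (by simp only [poly_mul, shift_mul, map_add, taylor_taylor, add_assoc, add_comm c.shift])
      (add_assoc _ _ _))
    (fun a => SkewShift.ext (by simp) (by simp))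
    (fun a => SkewShift.ext (by simp [taylor_taylor]) (by simp))

theorem poly_conj {g : SkewShift R} (hg : g.shift = 0) (y : SkewShift R) :
    (y⁻¹ * g * y).poly = taylor y.shift g.poly := by
  simp [hg, taylor_taylor]

noncomputable instance : MulAction (SkewShift R) (R × R) where
  smul g x := (x.1 + g.poly.eval x.2, x.2 + g.shift)
  one_smul x := Prod.ext (by simp [HSMul.hSMul]) (by simp [HSMul.hSMul])
  mul_smul g g' x :=
    Prod.ext (by simp [HSMul.hSMul, taylor_eval, add_assoc])
      (by simp [HSMul.hSMul, add_comm, add_left_comm])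

theorem smul_def (g : SkewShift R) (x : R × R) :
    g • x = (x.1 + g.poly.eval x.2, x.2 + g.shift) := rfl

/-- The homomorphism of skew shifts induced by a ring homomorphism. -/
noncomputable def map (φ : R →+* S) : SkewShift R →* SkewShift S where
  toFun g := ⟨g.poly.map φ, φ g.shift⟩
  map_one' := SkewShift.ext (Polynomial.map_zero φ) φ.map_zero
  map_mul' g g' := SkewShift.ext (by simp) (by simp)

@[simp] theorem poly_map (φ : R →+* S) (g : SkewShift R) : (map φ g).poly = g.poly.map φ := rfl

@[simp] theorem shift_map (φ : R →+* S) (g : SkewShift R) : (map φ g).shift = φ g.shift := rfl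

/-- The value at the parameter `e` of a polynomial sequence of skew shifts. Such a sequence is
encoded as a skew shift over `R[X]`, whose indeterminate stands for the parameter. -/
noncomputable def evalAt (e : R) : SkewShift R[X] →* SkewShift R := map (evalRingHom e)

@[simp] theorem poly_evalAt (e : R) (D : SkewShift R[X]) :
    (evalAt e D).poly = D.poly.map (evalRingHom e) := rfl

@[simp] theorem shift_evalAt (e : R) (D : SkewShift R[X]) :
    (evalAt e D).shift = D.shift.eval e := rfl

theorem evalAt_map_C (e : R) (g : SkewShift R) : evalAt e (map C g) = g :=
  SkewShift.ext
    (by rw [poly_evalAt, poly_map, Polynomial.map_map, evalRingHom_comp_C, Polynomial.map_id])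
    (by simp)

theorem evalAt_map_taylor (e h : R) (D : SkewShift R[X]) :
    evalAt e (map (taylorAlgHom h : R[X] →+* R[X]) D) = evalAt (h + e) D := by
  have hcomp : (evalRingHom e).comp (taylorAlgHom h : R[X] →+* R[X]) = evalRingHom (h + e) :=
    RingHom.ext fun p => by simp [taylor_eval, add_comm h e]
  exact SkewShift.ext (by simp only [poly_evalAt, poly_map, Polynomial.map_map, hcomp])
    (congrArg (· D.shift) hcomp)

/-- The colour-focusing reduction `vdwReduction` of polynomial sequences of skew shifts. -/
noncomputable def reduce (D D₁ : SkewShift R[X]) (y : SkewShift R) (h : R) : SkewShift R[X] :=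
  (map C y)⁻¹ * ((map C (evalAt h D))⁻¹ * map (taylorAlgHom h : R[X] →+* R[X]) D * D₁⁻¹) * map C y

theorem evalAt_reduce (D D₁ : SkewShift R[X]) (y : SkewShift R) (h : R) :
    (fun e => evalAt e (reduce D D₁ y h)) =
      vdwReduction (fun e => evalAt e D) (fun e => evalAt e D₁) y h := by
  funext e
  simp only [reduce, map_mul, map_inv, evalAt_map_C, evalAt_map_taylor, vdwReduction, mul_assoc]

/-- The polynomial sequences of skew shifts that take the value `1` at the parameter `0`. -/
noncomputable def based (R : Type*) [CommRing R] : Subgroup (SkewShift R[X]) :=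
  (evalAt (0 : R)).ker

theorem mem_based {D : SkewShift R[X]} :
    D ∈ based R ↔ D.poly.map (evalRingHom 0) = 0 ∧ D.shift.eval 0 = 0 := by
  rw [based, MonoidHom.mem_ker, SkewShift.ext_iff]
  rfl

theorem reduce_mem_based {D₁ : SkewShift R[X]} (hD₁ : D₁ ∈ based R) (D : SkewShift R[X])
    (y : SkewShift R) (h : R) : reduce D D₁ y h ∈ based R := by
  rw [based, MonoidHom.mem_ker] at hD₁ ⊢
  simp only [reduce, map_mul, map_inv, evalAt_map_C, evalAt_map_taylor, hD₁, add_zero, inv_one,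
    mul_one, inv_mul_cancel]

/-- The coefficients of a skew shift, with the shift placed above those of the polynomial. -/
def coeffAt (g : SkewShift S) (i : WithTop ℕ) : S := i.recTopCoe g.shift g.poly.coeff

theorem coeffAt_top (g : SkewShift S) : g.coeffAt ⊤ = g.shift := rfl

theorem coeffAt_coe (g : SkewShift S) (i : ℕ) : g.coeffAt (.some i) = g.poly.coeff i := rfl

theorem coeffAt_reduce {D D₁ : SkewShift R[X]} {i : WithTop ℕ}
    (hD : ∀ j, i < j → D.coeffAt j = 0) (hD₁ : ∀ j, i < j → D₁.coeffAt j = 0)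
    (y : SkewShift R) (h : R) :
    (reduce D D₁ y h).coeffAt i =
      taylor h (D.coeffAt i) - C ((D.coeffAt i).eval h) - D₁.coeffAt i := by
  cases i with
  | top =>
    simp only [reduce, coeffAt_top, shift_mul, shift_inv, shift_map, shift_evalAt,
      RingHom.coe_coe, taylorAlgHom_apply]
    ring
  | coe i =>
    have hs : D.shift = 0 := hD ⊤ (WithTop.coe_lt_top i)
    have hs₁ : D₁.shift = 0 := hD₁ ⊤ (WithTop.coe_lt_top i)
    have hconj : (reduce D D₁ y h).poly = taylor (C y.shift)
        (D.poly.map (taylorAlgHom h : R[X] →+* R[X]) - (D.poly.map (evalRingHom h)).map C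
          - D₁.poly) := by
      rw [reduce, poly_conj (by simp [hs, hs₁])]
      simp only [shift_map, poly_mul, poly_inv, hs₁, neg_zero, taylor_zero, shift_inv, poly_map,
        hs, map_zero, shift_evalAt, eval_zero, poly_evalAt, map_add, map_neg, map_sub]
      ring
    have hcoeff (j : ℕ) (hj : i < j) : D.poly.coeff j = 0 ∧ D₁.poly.coeff j = 0 :=
      ⟨hD j (WithTop.coe_lt_coe.2 hj), hD₁ j (WithTop.coe_lt_coe.2 hj)⟩
    simp only [coeffAt_coe]
    rw [hconj, coeff_taylor_eq_of_coeff_eq_zero]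
    · simp
    · intro j hj
      simp [hcoeff j hj]

/-- The coefficients in `R` of a polynomial sequence of skew shifts, indexed so that the
lexicographic order compares first the power of the second coordinate and then that of the
parameter. -/
noncomputable def bicoeff (D : SkewShift R[X]) (m : WithTop ℕ ×ₗ ℕ) : R :=
  (D.coeffAt (ofLex m).1).coeff (ofLex m).2

theorem coeffAt_eq_zero_of_bicoeff_eq_zero {D : SkewShift R[X]} {m : WithTop ℕ ×ₗ ℕ}
    (hD : ∀ m', m < m' → D.bicoeff m' = 0) {i : WithTop ℕ} (hi : (ofLex m).1 < i) :
    D.coeffAt i = 0 :=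
  Polynomial.ext fun n => hD (toLex (i, n)) (Prod.Lex.lt_iff.2 (Or.inl hi))

theorem coeffAt_coeff_zero {D : SkewShift R[X]} (hD : D ∈ based R) (i : WithTop ℕ) :
    (D.coeffAt i).coeff 0 = 0 := by
  obtain ⟨hpoly, hshift⟩ := mem_based.1 hD
  rw [coeff_zero_eq_eval_zero]
  cases i with
  | top => exact hshift
  | coe i =>
    rw [coeffAt_coe]
    simpa using congrArg (coeff · i) hpoly

theorem bicoeff_reduce {D D₁ : SkewShift R[X]} (hD : D ∈ based R) {m : WithTop ℕ ×ₗ ℕ}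
    (hm : ∀ m', m < m' → D.bicoeff m' = 0) (hm₁ : ∀ m', m < m' → D₁.bicoeff m' = 0)
    (y : SkewShift R) (h : R) :
    (reduce D D₁ y h).bicoeff m = D.bicoeff m - D₁.bicoeff m := by
  rw [bicoeff, coeffAt_reduce (fun _ => coeffAt_eq_zero_of_bicoeff_eq_zero hm)
    (fun _ => coeffAt_eq_zero_of_bicoeff_eq_zero hm₁), coeff_sub, coeff_taylor_sub_C_eval]
  · rfl
  · exact coeffAt_coeff_zero hD _
  · exact fun n hn => hm (toLex ((ofLex m).1, n)) (Prod.Lex.lt_iff.2 (Or.inr ⟨rfl, hn⟩))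

open Classical in
/-- The largest index of a nonzero coefficient of a skew shift. -/
noncomputable def height (g : SkewShift S) : WithTop ℕ :=
  if g.shift = 0 then .some g.poly.natDegree else ⊤

theorem coeffAt_height_ne_zero {g : SkewShift S} (hg : g ≠ 1) : g.coeffAt g.height ≠ 0 := by
  by_cases hs : g.shift = 0
  · rw [height, if_pos hs, coeffAt_coe]
    exact leadingCoeff_ne_zero.2 fun hp => hg (SkewShift.ext hp hs)
  · rwa [height, if_neg hs, coeffAt_top]

theorem coeffAt_eq_zero_of_height_lt {g : SkewShift S} {i : WithTop ℕ} (hi : g.height < i) :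
    g.coeffAt i = 0 := by
  by_cases hs : g.shift = 0
  · rw [height, if_pos hs] at hi
    cases i with
    | top => exact hs
    | coe i => exact coeff_eq_zero_of_natDegree_lt (WithTop.coe_lt_coe.1 hi)
  · rw [height, if_neg hs] at hi
    exact absurd hi not_top_lt

/-- The index of the leading coefficient of a polynomial sequence of skew shifts; the weight of
the induction consists of such indices. -/
noncomputable def level (D : SkewShift R[X]) : WithTop ℕ ×ₗ ℕ :=
  toLex (D.height, (D.coeffAt D.height).natDegree)

theorem bicoeff_level_ne_zero {D : SkewShift R[X]} (hD : D ≠ 1) : D.bicoeff D.level ≠ 0 :=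
  leadingCoeff_ne_zero.2 (coeffAt_height_ne_zero hD)

theorem bicoeff_eq_zero_of_level_lt {D : SkewShift R[X]} {m : WithTop ℕ ×ₗ ℕ}
    (hm : D.level < m) : D.bicoeff m = 0 := by
  rcases Prod.Lex.lt_iff.1 hm with hi | ⟨hi, hn⟩
  · rw [bicoeff, coeffAt_eq_zero_of_height_lt hi, coeff_zero]
  · rw [bicoeff, ← hi]
    exact coeff_eq_zero_of_natDegree_lt hn

theorem level_reduce {D D₁ : SkewShift R[X]} (hD : D ∈ based R) (hD_ne : D ≠ 1)
    (hD₁ : D₁.level ≤ D.level) {y : SkewShift R} {h : R} (hne : reduce D D₁ y h ≠ 1)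
    (hle : D₁.level ≤ (reduce D D₁ y h).level) : (reduce D D₁ y h).level = D.level := by
  have hcoeff {m} (hm : D.level ≤ m) (hm₁ : D₁.level ≤ m) :
      (reduce D D₁ y h).bicoeff m = D.bicoeff m - D₁.bicoeff m :=
    bicoeff_reduce hD (fun _ hlt => bicoeff_eq_zero_of_level_lt (hm.trans_lt hlt))
      (fun _ hlt => bicoeff_eq_zero_of_level_lt (hm₁.trans_lt hlt)) y h
  refine le_antisymm (le_of_not_gt fun hlt => ?_) (le_of_not_gt fun hlt => ?_)
  · refine bicoeff_level_ne_zero hne ?_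
    rw [hcoeff hlt.le hle, bicoeff_eq_zero_of_level_lt hlt,
      bicoeff_eq_zero_of_level_lt (hD₁.trans_lt hlt), sub_zero]
  · refine bicoeff_level_ne_zero hD_ne ?_
    have hsub := hcoeff le_rfl hD₁
    rwa [bicoeff_eq_zero_of_level_lt hlt, bicoeff_eq_zero_of_level_lt (hle.trans_lt hlt),
      sub_zero, eq_comm] at hsub

theorem bicoeff_reduce_level {D D₁ : SkewShift R[X]} (hD : D ∈ based R)
    (hD₁ : D₁.level ≤ D.level) (y : SkewShift R) (h : R) :
    (reduce D D₁ y h).bicoeff D.level = D.bicoeff D.level - D₁.bicoeff D.level :=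
  bicoeff_reduce hD (fun _ => bicoeff_eq_zero_of_level_lt)
    (fun _ hlt => bicoeff_eq_zero_of_level_lt (hD₁.trans_lt hlt)) y h

open Classical in
/-- The weight of a finite family of polynomial sequences of skew shifts, a multiset of levels:
each level is counted once for every leading coefficient that occurs at it. -/
noncomputable def weight (F : Finset (SkewShift R[X])) : Multiset (WithTop ℕ ×ₗ ℕ) :=
  ((F.erase 1).image fun D => (D.level, D.bicoeff D.level)).val.map Prod.fst

/-- Above the minimal level, subtracting the coefficients of `D₁` does not create new leading
coefficients, and at the minimal level that of `D₁` itself disappears. -/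
theorem weight_lt_of_forall_eq_reduce {F F' : Finset (SkewShift R[X])} {D₁ : SkewShift R[X]}
    (hF : ∀ D ∈ F, D ∈ based R) (hD₁ : D₁ ∈ F) (hD₁_ne : D₁ ≠ 1)
    (hmin : ∀ D ∈ F, D ≠ 1 → D₁.level ≤ D.level)
    (hF' : ∀ D' ∈ F', ∃ D ∈ F, D ≠ 1 ∧ ∃ y h, D' = reduce D D₁ y h) :
    Multiset.IsDershowitzMannaLT (weight F') (weight F) := by
  classical
  refine isDershowitzMannaLT_map (a₀ := (D₁.level, D₁.bicoeff D₁.level))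
    (ψ := fun c => (c.1, c.2 + D₁.bicoeff c.1))
    (Finset.mem_image_of_mem _ (Finset.mem_erase.2 ⟨hD₁_ne, hD₁⟩)) ?_ ?_
  · rintro ⟨m, b⟩ ⟨m', b'⟩ heq
    obtain ⟨hm, hb⟩ := Prod.mk.inj heq
    obtain rfl : m = m' := hm
    exact Prod.ext rfl (add_right_cancel hb)
  · intro c hc hle
    obtain ⟨D', hD', rfl⟩ := Finset.mem_image.1 hc
    obtain ⟨hne, hD'⟩ := Finset.mem_erase.1 hD'
    obtain ⟨D, hD, hD_ne, y, h, rfl⟩ := hF' D' hD'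
    have hD₁_le := hmin D hD hD_ne
    have hlevel := level_reduce (hF D hD) hD_ne hD₁_le hne hle
    have hcoeff := bicoeff_reduce_level (hF D hD) hD₁_le y h
    have hlead := bicoeff_level_ne_zero hne
    rw [hlevel, hcoeff] at hlead ⊢
    rw [sub_add_cancel]
    refine ⟨Finset.mem_image_of_mem _ (Finset.mem_erase.2 ⟨hD_ne, hD⟩), fun heq => hlead ?_, rfl⟩
    obtain ⟨hl, hb⟩ := Prod.mk.inj heq
    have hl : D.level = D₁.level := hl
    rw [hb, hl, sub_self]

theorem isVdW_evalAt_of_erase_one [DecidableEq (SkewShift R[X])] {S : AddSubsemigroup R}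
    {F : Finset (SkewShift R[X])}
    (hF : IsVdW S ((fun D e => evalAt e D) '' (F.erase 1 : Set (SkewShift R[X])))) :
    IsVdW S ((fun D e => evalAt e D) '' (F : Set (SkewShift R[X]))) := by
  refine hF.of_subset_insert_one (Set.image_subset_iff.2 fun D hD => ?_)
  by_cases hD_one : D = 1
  · exact Or.inl (hD_one ▸ funext fun e => _root_.map_one (evalAt e))
  · exact Or.inr (Set.mem_image_of_mem _ (Finset.mem_erase.2 ⟨hD_one, hD⟩))

theorem isVdW_evalAt {S : AddSubsemigroup R} (hS : (S : Set R).Nonempty)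
    (F : Finset (SkewShift R[X])) (hF : ∀ D ∈ F, D ∈ based R) :
    IsVdW S ((fun D e => evalAt e D) '' (F : Set (SkewShift R[X]))) := by
  classical
  induction F using
    (InvImage.wf weight (Multiset.wellFounded_isDershowitzMannaLT
      (α := WithTop ℕ ×ₗ ℕ))).induction with
  | _ F ih =>
  refine isVdW_evalAt_of_erase_one ?_
  rcases (F.erase 1).eq_empty_or_nonempty with hempty | hne
  · rw [hempty, Finset.coe_empty, Set.image_empty]
    exact isVdW_empty hS
  obtain ⟨D₁, hD₁, hmin⟩ := Finset.exists_min_image (F.erase 1) level hne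
  obtain ⟨hD₁_ne, hD₁⟩ := Finset.mem_erase.1 hD₁
  refine IsVdW.of_vdwReduction (f₁ := fun e => evalAt e D₁) ((F.erase 1).finite_toSet.image _) ?_
    fun B hB H hH => ?_
  · rintro _ ⟨D, hD, rfl⟩
    exact hF D (Finset.mem_of_mem_erase hD)
  let F' : Finset (SkewShift R[X]) :=
    ((F.erase 1) ×ˢ hB.toFinset ×ˢ hH.toFinset).image fun t => reduce t.1 D₁ t.2.1 t.2.2
  have hF' : ∀ D' ∈ F', ∃ D ∈ F, D ≠ 1 ∧ ∃ y h, D' = reduce D D₁ y h := by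
    intro D' hD'
    obtain ⟨⟨D, y, h⟩, ht, rfl⟩ := Finset.mem_image.1 hD'
    obtain ⟨hD_ne, hD⟩ := Finset.mem_erase.1 (Finset.mem_product.1 ht).1
    exact ⟨D, hD, hD_ne, y, h, rfl⟩
  have hlt : Multiset.IsDershowitzMannaLT (weight F') (weight F) :=
    weight_lt_of_forall_eq_reduce hF hD₁ hD₁_ne
      (fun D hD hD_ne => hmin D (Finset.mem_erase.2 ⟨hD_ne, hD⟩)) hF'
  have hbased : ∀ D' ∈ F', D' ∈ based R := fun D' hD' => by
    obtain ⟨D, -, -, y, h, rfl⟩ := hF' D' hD'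
    exact reduce_mem_based (hF D₁ hD₁) D y h
  refine (ih F' hlt hbased).of_subset_insert_one fun f hf => Or.inr ?_
  obtain ⟨_, ⟨D, hD, rfl⟩, y, hy, h, hh, rfl⟩ := hf
  refine ⟨reduce D D₁ y h, Finset.mem_image.2 ⟨(D, y, h), ?_, rfl⟩, evalAt_reduce D D₁ y h⟩
  exact Finset.mem_product.2
    ⟨hD, Finset.mem_product.2 ⟨hB.mem_toFinset.2 hy, hH.mem_toFinset.2 hh⟩⟩

end SkewShift

theorem natDegree_taylor_sub_le {A : Type*} [CommRing A] {q : A[X]} {n : ℕ}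
    (hq : q.natDegree ≤ n + 1) (x : A) : (taylor x q - q).natDegree ≤ n := by
  refine natDegree_le_iff_coeff_eq_zero.2 fun m hm => ?_
  rw [coeff_sub, coeff_taylor_eq_of_coeff_eq_zero, sub_self]
  exact fun m' hm' => coeff_eq_zero_of_natDegree_lt (by omega)

theorem coeff_taylor_sub {A : Type*} [CommRing A] {q : A[X]} {n : ℕ}
    (hq : q.natDegree ≤ n + 1) (x : A) :
    (taylor x q - q).coeff n = (n + 1) * q.coeff (n + 1) * x := by
  have hdeg : (hasseDeriv n q).natDegree ≤ 1 := (natDegree_hasseDeriv_le _ _).trans (by omega)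
  rw [coeff_sub, taylor_coeff, eq_X_add_C_of_natDegree_le_one hdeg]
  simp [hasseDeriv_coeff, add_comm 1 n]

theorem C_factorial_mul_mem_of_taylor_sub_mem {A : Type*} [CommRing A] {I : AddSubgroup A}
    {M : AddSubgroup A[X]} {x : A} (hx : x ∈ I) {n : ℕ} {q : A[X]} (hq : q.natDegree ≤ n + 1)
    (hM : ∀ ρ ∈ I, taylor ρ q - q ∈ M) {ρ : A} (hρ : ρ ∈ I) :
    C ((n + 1).factorial * q.coeff (n + 1) * x ^ n * ρ) ∈ M := by
  induction n generalizing q with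
  | zero =>
    have hconst : taylor ρ q - q = C ((taylor ρ q - q).coeff 0) :=
      eq_C_of_natDegree_le_zero (natDegree_taylor_sub_le hq ρ)
    rw [coeff_taylor_sub hq] at hconst
    simpa [hconst] using hM ρ hρ
  | succ n ih =>
    have hstep : ∀ σ ∈ I, taylor σ (taylor x q - q) - (taylor x q - q) ∈ M := by
      intro σ hσ
      have hsub : taylor σ (taylor x q - q) - (taylor x q - q) =
          (taylor (σ + x) q - q) - (taylor σ q - q) - (taylor x q - q) := by
        rw [map_sub, taylor_taylor]
        ring
      rw [hsub]
      exact M.sub_mem (M.sub_mem (hM _ (I.add_mem hσ hx)) (hM _ hσ)) (hM _ hx)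
    have hmem := ih (natDegree_taylor_sub_le hq x) hstep
    rw [coeff_taylor_sub hq] at hmem
    convert hmem using 2
    rw [Nat.factorial_succ (n + 1)]
    push_cast
    ring

section ForcedPeriods

open SkewShift

variable {R : Type*} [CommRing R]

/-- The relation `r` identifies the `p`-th and the `q`-th point of the progression with base point
and difference `x`. Colourings enter only through the equivalence relation of having the same
colour. -/
def Coincide (r : Setoid R) (p q : R[X]) (x : R × R) : Prop :=
  r (x.1 + p.eval x.2) (x.1 + q.eval x.2)

/-- Coincidences of the `p`-th and the `q`-th point at finitely many skew shifts of `x` force the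
`p`-th point of `x` to be equivalent to its translate by the value of `W`. The outer variable of
`W` is the second coordinate of `x`, the inner one the parameter `e` of the skew shifts. -/
def IsForcedPeriod (p q : R[X]) (W : R[X][X]) : Prop :=
  ∃ F : Finset (SkewShift R[X]), (∀ D ∈ F, D ∈ based R) ∧
    ∀ (r : Setoid R) (x : R × R) (e : R), (∀ D ∈ F, Coincide r p q (evalAt e D • x)) →
      r (x.1 + p.eval x.2 + W.evalEval e x.2) (x.1 + p.eval x.2)

variable {p q : R[X]}

theorem evalAt_mk_zero_smul (e : R) (V : R[X][X]) (x : R × R) :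
    evalAt e ⟨V, 0⟩ • x = (x.1 + V.evalEval e x.2, x.2) := by
  simp [smul_def, map_evalRingHom_eval]

theorem mk_zero_mem_based {V : R[X][X]} (hV : V.map (evalRingHom 0) = 0) :
    (⟨V, 0⟩ : SkewShift R[X]) ∈ based R :=
  mem_based.2 ⟨hV, eval_zero⟩

theorem IsForcedPeriod.translate {V W : R[X][X]} (hW : IsForcedPeriod p q W)
    (hV : V.map (evalRingHom 0) = 0) :
    ∃ F : Finset (SkewShift R[X]), (∀ D ∈ F, D ∈ based R) ∧
      ∀ (r : Setoid R) (x : R × R) (e : R), (∀ D ∈ F, Coincide r p q (evalAt e D • x)) →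
        r (x.1 + V.evalEval e x.2 + p.eval x.2 + W.evalEval e x.2)
          (x.1 + V.evalEval e x.2 + p.eval x.2) := by
  classical
  obtain ⟨F, hF, hforce⟩ := hW
  refine ⟨F.image (· * ⟨V, 0⟩), ?_, fun r x e hr => ?_⟩
  · exact Finset.forall_mem_image.2 fun D hD => mul_mem (hF D hD) (mk_zero_mem_based hV)
  · have htranslate := hforce r (evalAt e ⟨V, 0⟩ • x) e fun D hD => by
      rw [smul_smul, ← map_mul]
      exact hr _ (Finset.mem_image_of_mem _ hD)
    rwa [evalAt_mk_zero_smul] at htranslate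

theorem IsForcedPeriod.zero : IsForcedPeriod p q 0 :=
  ⟨∅, by simp, fun r x e _ => by rw [evalEval_zero, add_zero]⟩

theorem IsForcedPeriod.add {V W : R[X][X]} (hV : IsForcedPeriod p q V)
    (hV₀ : V.map (evalRingHom 0) = 0) (hW : IsForcedPeriod p q W) :
    IsForcedPeriod p q (V + W) := by
  classical
  obtain ⟨F, hF, hforce⟩ := hV
  obtain ⟨F', hF', hforce'⟩ := hW.translate hV₀
  refine ⟨F ∪ F', fun D hD => (Finset.mem_union.1 hD).elim (hF D) (hF' D), fun r x e hr => ?_⟩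
  have hVr := hforce r x e fun D hD => hr D (Finset.mem_union_left _ hD)
  have hWr := hforce' r x e fun D hD => hr D (Finset.mem_union_right _ hD)
  rw [add_right_comm x.1] at hWr
  rw [evalEval_add, ← add_assoc]
  exact r.trans hWr hVr

theorem IsForcedPeriod.neg {W : R[X][X]} (hW : IsForcedPeriod p q W)
    (hW₀ : W.map (evalRingHom 0) = 0) : IsForcedPeriod p q (-W) := by
  obtain ⟨F, hF, hforce⟩ := hW.translate (V := -W) (by rw [Polynomial.map_neg, hW₀, neg_zero])
  refine ⟨F, hF, fun r x e hr => r.symm ?_⟩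
  have hback := hforce r x e hr
  rw [evalEval_neg]
  rwa [add_right_comm x.1, evalEval_neg, neg_add_cancel_right] at hback

/-- The forced periods that vanish at the parameter `0`. -/
def forcedPeriods (p q : R[X]) : AddSubgroup R[X][X] where
  carrier := {W | W.map (evalRingHom 0) = 0 ∧ IsForcedPeriod p q W}
  zero_mem' := ⟨Polynomial.map_zero _, .zero⟩
  add_mem' hV hW :=
    ⟨by rw [Polynomial.map_add, hV.1, hW.1, add_zero], hV.2.add hV.1 hW.2⟩
  neg_mem' hW := ⟨by rw [Polynomial.map_neg, hW.1, neg_zero], hW.2.neg hW.1⟩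

theorem map_taylor_map_C_sub (e : R) (ρ f : R[X]) :
    (taylor ρ (f.map C) - f.map C).map (evalRingHom e) = taylor (ρ.eval e) f - f := by
  rw [Polynomial.map_sub, map_taylor, Polynomial.map_map, evalRingHom_comp_C, Polynomial.map_id,
    coe_evalRingHom]

/-- The `p`-th point of `x` is equivalent to the `q`-th one, which by the choice of the second
skew shift is also the `q`-th point of the progression there. -/
theorem taylor_sub_mem_forcedPeriods (p q : R[X]) {ρ : R[X]} (hρ : ρ.eval 0 = 0) :
    taylor ρ ((p - q).map C) - (p - q).map C ∈ forcedPeriods p q := by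
  classical
  refine ⟨by rw [map_taylor_map_C_sub, hρ, taylor_zero, sub_self],
    {1, ⟨-(taylor ρ (q.map C) - q.map C), ρ⟩}, ?_, fun r x e hr => ?_⟩
  · simp only [Finset.mem_insert, Finset.mem_singleton, forall_eq_or_imp, forall_eq]
    refine ⟨one_mem _, mem_based.2 ⟨?_, hρ⟩⟩
    rw [Polynomial.map_neg, map_taylor_map_C_sub, hρ, taylor_zero, sub_self, neg_zero]
  · simp only [Finset.mem_insert, Finset.mem_singleton, forall_eq_or_imp, forall_eq] at hr
    obtain ⟨hx, hshift⟩ := hr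
    rw [Coincide, _root_.map_one, one_smul] at hx
    rw [Coincide, smul_def, poly_evalAt, shift_evalAt, Polynomial.map_neg, map_taylor_map_C_sub]
      at hshift
    rw [← map_evalRingHom_eval, map_taylor_map_C_sub]
    simp only [eval_sub, eval_neg, taylor_eval] at hshift ⊢
    refine r.trans ?_ (r.symm hx)
    convert hshift using 1 <;> ring

theorem exists_dilation [IsDomain R] [CharZero R] (hp : p.eval 0 = 0) (hq : q.eval 0 = 0)
    (hne : p ≠ q) :
    ∃ δ : R[X], (∀ e ≠ 0, δ.eval e ≠ 0) ∧
      ∀ s : R[X], s.eval 0 = 0 → IsForcedPeriod p q (C (s.comp δ)) := by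
  have hpq : p - q ≠ 0 := sub_ne_zero.2 hne
  obtain ⟨n, hn⟩ : ∃ n, (p - q).natDegree = n + 1 := by
    refine Nat.exists_eq_succ_of_ne_zero fun hdeg => hpq ?_
    rw [eq_C_of_natDegree_eq_zero hdeg, coeff_zero_eq_eval_zero, eval_sub, hp, hq, sub_self, C_0]
  set c : R := (n + 1).factorial * (p - q).coeff (n + 1) with hc
  have hc_ne : c ≠ 0 := mul_ne_zero (Nat.cast_ne_zero.2 (Nat.factorial_ne_zero _))
    (hn ▸ leadingCoeff_ne_zero.2 hpq)
  refine ⟨C c * X ^ (n + 1), fun e he => by simp [hc_ne, he], fun s hs => ?_⟩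
  have hfactor : s.comp (C c * X ^ (n + 1)) =
      C c * X ^ n * (X * s.divX.comp (C c * X ^ (n + 1))) := by
    conv_lhs => rw [← divX_mul_X_add s, coeff_zero_eq_eval_zero, hs]
    simp only [map_zero, add_zero, mul_comp, X_comp]
    ring
  have hmem := C_factorial_mul_mem_of_taylor_sub_mem (I := (evalRingHom (0 : R)).toAddMonoidHom.ker)
    (M := forcedPeriods p q) (x := X) (q := (p - q).map C)
    (ρ := X * s.divX.comp (C c * X ^ (n + 1))) eval_X (natDegree_map_le.trans hn.le)
    (fun ρ hρ => taylor_sub_mem_forcedPeriods p q hρ) (by simp)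
  rw [coeff_map, ← C_eq_natCast, ← C_mul, ← hc, ← hfactor] at hmem
  exact hmem.2

end ForcedPeriods

section CanonicalVdW

open SkewShift

variable {R : Type*} [CommRing R]

theorem exists_addSubsemigroup_forall_ne_zero (A : Type*) [AddMonoidWithOne A] [CharZero A] :
    ∃ S : AddSubsemigroup A, (S : Set A).Nonempty ∧ ∀ e ∈ S, e ≠ 0 := by
  refine ⟨⟨(↑) '' {n : ℕ | n ≠ 0}, ?_⟩, ⟨1, 1, one_ne_zero, Nat.cast_one⟩, ?_⟩
  · rintro _ _ ⟨m, hm, rfl⟩ ⟨n, -, rfl⟩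
    exact ⟨m + n, fun h => hm (Nat.add_eq_zero_iff.1 h).1, Nat.cast_add m n⟩
  · rintro _ ⟨n, hn, rfl⟩
    exact Nat.cast_ne_zero.2 hn

theorem exists_forall_color_evalAt_smul_eq [CharZero R] (κ : Type*) [Finite κ]
    {F : Finset (SkewShift R[X])} (hF : ∀ D ∈ F, D ∈ based R) :
    ∃ B : Set (R × R), B.Finite ∧ ∃ H : Set R, H.Finite ∧ (∀ e ∈ H, e ≠ 0) ∧
      ∀ φ : R × R → κ, ∃ x ∈ B, ∃ e ∈ H, ∀ D ∈ F, φ (evalAt e D • x) = φ x := by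
  obtain ⟨S, hS, hS_ne⟩ := exists_addSubsemigroup_forall_ne_zero R
  obtain ⟨B, hB, H, hH, hHS, hret⟩ := (isVdW_evalAt hS F hF).exists_smul (κ := κ) (0 : R × R)
  refine ⟨B, hB, H, hH, fun e he => hS_ne e (hHS he), fun φ => ?_⟩
  obtain ⟨x, hx, e, he, hcol⟩ := hret φ
  exact ⟨x, hx, e, he, fun D hD => hcol _ ⟨D, hD, rfl⟩⟩

variable [IsDomain R] [CharZero R] {ι : Type*} [Finite ι] {p : ι → R[X]}

theorem exists_forall_coincide_forces (hp₀ : ∀ i, (p i).eval 0 = 0) (hp : Function.Injective p) :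
    ∃ δ : ι → ι → R[X], (∀ i j, i ≠ j → ∀ e ≠ 0, (δ i j).eval e ≠ 0) ∧
      ∃ F : Finset (SkewShift R[X]), (∀ D ∈ F, D ∈ based R) ∧
        ∀ (r : Setoid R) (x : R × R) (e : R) (i j : ι), i ≠ j →
          (∀ D ∈ F, Coincide r (p i) (p j) (evalAt e D • x)) →
            ∀ l, r (x.1 + (p i).eval x.2 + (p l).eval ((δ i j).eval e))
              (x.1 + (p i).eval x.2) := by
  classical
  have := Fintype.ofFinite ι
  choose! δ hδ hforced using fun (i j : ι) (hij : i ≠ j) =>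
    exists_dilation (hp₀ i) (hp₀ j) (hp.ne hij)
  choose! F hF hforce using fun (i j : ι) (hij : i ≠ j) (l : ι) => hforced i j hij (p l) (hp₀ l)
  refine ⟨δ, hδ, (Finset.univ : Finset {t : ι × ι // t.1 ≠ t.2}).biUnion fun t =>
    Finset.univ.biUnion (F t.1.1 t.1.2), fun D hD => ?_, fun r x e i j hij hr l => ?_⟩
  · simp only [Finset.mem_biUnion, Finset.mem_univ, true_and] at hD
    obtain ⟨⟨⟨i, j⟩, hij⟩, l, hD⟩ := hD
    exact hF i j hij l D hD
  · have hperiod := hforce i j hij l r x e fun D hD => hr D <|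
      Finset.mem_biUnion.2 ⟨⟨(i, j), hij⟩, Finset.mem_univ _,
        Finset.mem_biUnion.2 ⟨l, Finset.mem_univ _, hD⟩⟩
    rwa [evalEval_C, eval_comp] at hperiod

theorem finitary_canonical_polynomial_vdw_general (p : ι → R[X]) (hp₀ : ∀ i, (p i).eval 0 = 0)
    (hp : Function.Injective p) :
    ∃ Y : Set R, Y.Finite ∧ ∀ {κ : Type*} (χ : R → κ), ∃ a d : R, d ≠ 0 ∧
      (∀ i, a + (p i).eval d ∈ Y) ∧
      ((∀ i, χ (a + (p i).eval d) = χ a) ∨ Function.Injective fun i => χ (a + (p i).eval d)) := by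
  rcases subsingleton_or_nontrivial ι with _ | _
  · exact ⟨Set.range fun i => 0 + (p i).eval 1, Set.finite_range _, fun χ => ⟨0, 1, one_ne_zero,
      Set.mem_range_self, Or.inr (Function.injective_of_subsingleton _)⟩⟩
  obtain ⟨δ, hδ, F, hF, hforce⟩ := exists_forall_coincide_forces hp₀ hp
  obtain ⟨B, hB, H, hH, hH_ne, hret⟩ := exists_forall_color_evalAt_smul_eq (Set (ι × ι)) hF
  set base : (R × R) × R × ι × ι → R × R := fun t =>
    (t.1.1 + (p t.2.2.1).eval t.1.2, (δ t.2.2.1 t.2.2.2).eval t.2.1)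
  refine ⟨Set.image2 (fun b l => b.1 + (p l).eval b.2) (B ∪ base '' (B ×ˢ H ×ˢ Set.univ)) Set.univ,
    (hB.union ((hB.prod (hH.prod Set.finite_univ)).image _)).image2 _ Set.finite_univ,
    fun χ => ?_⟩
  obtain ⟨x, hx, e, he, hpattern⟩ :=
    hret fun x => {t | Coincide (Setoid.ker χ) (p t.1) (p t.2) x}
  by_cases hinj : Function.Injective fun i => χ (x.1 + (p i).eval x.2)
  · refine ⟨x.1, x.2, fun hd => ?_,
      fun l => ⟨x, Or.inl hx, l, trivial, rfl⟩, Or.inr hinj⟩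
    obtain ⟨i, j, hij⟩ := exists_pair_ne ι
    exact hij (hinj (by simp only [hd, hp₀]))
  · obtain ⟨i, j, hcol, hij⟩ := Function.not_injective_iff.1 hinj
    refine ⟨x.1 + (p i).eval x.2, (δ i j).eval e, hδ i j hij e (hH_ne e he),
      fun l => ⟨_, Or.inr ⟨(x, e, i, j), ⟨hx, he, trivial⟩, rfl⟩, l, trivial, rfl⟩,
      Or.inl fun l => ?_⟩
    exact hforce (Setoid.ker χ) x e i j hij
      (fun D hD => (Set.ext_iff.1 (hpattern D hD) (i, j)).2 hcol) l

end CanonicalVdW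

end Polynomial

theorem exists_forall_add_mem_Icc {Y : Set ℤ} (hY : Y.Finite) :
    ∃ (s : ℤ) (N : ℕ), ∀ y ∈ Y, y + s ∈ Set.Icc (1 : ℤ) N := by
  obtain ⟨l, hl⟩ := hY.bddBelow
  obtain ⟨u, hu⟩ := hY.bddAbove
  refine ⟨1 - l, (u + 1 - l).toNat, fun y hy => ?_⟩
  have hly := hl hy
  have hyu := hu hy
  constructor <;> omega

/-- **Finitary canonical polynomial Van der Waerden theorem.**
Let `p 1, ..., p k` be pairwise distinct nonzero integral polynomials.  Then
there exists `N` such that for every colouring `χ : {1, ..., N} → ℕ` there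
exist `a ∈ ℤ` and `d ≠ 0` with `{a, a + p 1 d, ..., a + p k d} ⊆ {1, ..., N}`
such that either `χ` takes the same value on all of
`a, a + p 1 d, ..., a + p k d`, or these integers are pairwise distinct and
`χ` takes pairwise distinct values on them. -/
theorem finitary_canonical_polynomial_vdw {k : ℕ} (p : Fin k → Polynomial ℤ)
    (hp0 : ∀ i, (p i).eval 0 = 0) (hpne : ∀ i, p i ≠ 0)
    (hpdist : ∀ i j, i ≠ j → p i ≠ p j) :
    ∃ N : ℕ, ∀ χ : ℤ → ℕ,
      ∃ a d : ℤ, d ≠ 0 ∧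
        a ∈ Set.Icc (1 : ℤ) (N : ℤ) ∧
        (∀ i : Fin k, a + (p i).eval d ∈ Set.Icc (1 : ℤ) (N : ℤ)) ∧
        ((∀ i : Fin k, χ (a + (p i).eval d) = χ a) ∨
         ((Function.Injective fun i : Fin k => a + (p i).eval d) ∧
          (∀ i : Fin k, a + (p i).eval d ≠ a) ∧
          (Function.Injective fun i : Fin k => χ (a + (p i).eval d)) ∧
          (∀ i : Fin k, χ (a + (p i).eval d) ≠ χ a))) := by
  obtain ⟨Y, hY, hcol⟩ := finitary_canonical_polynomial_vdw_general
    (fun o : Option (Fin k) => o.elim 0 p) (Option.forall.2 ⟨Polynomial.eval_zero, hp0⟩)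
    (Option.injective_iff.2 ⟨fun i j => not_imp_not.1 (hpdist i j),
      fun ⟨i, hi⟩ => hpne i hi⟩)
  obtain ⟨s, N, hN⟩ := exists_forall_add_mem_Icc hY
  refine ⟨N, fun χ => ?_⟩
  obtain ⟨a, d, hd, hmem, hχ⟩ := hcol fun x => χ (x + s)
  have hmem' := Option.forall.1 fun o => hN _ (hmem o)
  simp only [Option.forall, Option.injective_iff, Option.elim_none, Option.elim_some,
    Polynomial.eval_zero, add_zero, add_right_comm a _ s, Function.comp_def, Set.mem_range,
    not_exists, true_and] at hmem' hχ
  refine ⟨a + s, d, hd, hmem'.1, hmem'.2, hχ.imp_right fun ⟨hinj, hne⟩ => ?_⟩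
  exact ⟨fun i j hij => hinj (congrArg χ hij), fun i hi => hne i (congrArg χ hi), hinj, hne⟩
end
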